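/- Let ε > 0 and let p = p(n) satisfy n·p(n) → ∞ as n → ∞ and p(n) ≤ n^{-1/2-ε} for all large n. Then with high probability, every automorphism of a random graph G ∈ G(n,p) fixes every vertex of the 2-core of G (i.e., π(v) = v for every automorphism π of G and every v ∈ R(G)). -/

import Mathlib

/-!
The argument is a first-moment computation. Write `d = n p`, and attach to a vertex `v` its
*statistics*: the numbers `cnt F j v`, for `j < 10`, of neighbours of `v` whose degree has binary
digit `1` in position `j`. Automorphisms preserve statistics.

**Coincidences are rare.** For a fixed small set `W` of vertices, condition on the edges meeting `W`.
Almost surely each `z ∈ W` has about `d` private neighbours, that is, neighbours outside `W` with no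
other neighbour in `W`. The degrees of distinct private neighbours depend on disjoint sets of
unexposed edges, and the binomial distribution modulo `2 ^ 10` is almost uniform
(`exists_ex_testBit_le`, by finite Fourier analysis). Hence each number `cnt F j z` behaves like a
binomial variable with mean of order `d`, these are almost independent, and `z` has prescribed
statistics with probability `O(d ^ (-5))`. Therefore `a` simultaneous coincidences in `W` have
probability at most `E ^ a` with `E = O(d ^ (-5))` (`cond_bound`, `bd_bound`, `theta_bound`).

**An automorphism moving a vertex of the 2-core creates coincidences along paths.** Let `S` induce
minimum degree at least two and let `f` be an automorphism moving a vertex of `S`. Consider paths in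
`S` that are disjoint from their images under `f`; such a path on one vertex exists. If there is one
with `r = O(log n)` vertices, the graph contains two disjoint paths on `r` vertices each with equal
statistics. Otherwise take a maximal one, with `a < r` vertices, and a further edge within `S` at
each of its ends. Either the path, its image and at most two further vertices span at least as many
edges as vertices, or, possibly after passing to another path of the same length, the end of the path
is adjacent to the image of its start. In the second case the iterates of `f` give a walk along which
the statistics are periodic, and this walk either stays a path for long or closes a cycle
(`configurations`).

**Counting.** A pattern with `s` vertices and `e` edges has at most `n ^ s p ^ e = d ^ s p ^ (e - s)`
expected copies. In the short cases `e ≥ s`, the number of vertices is `O(a)` and there are at least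
`a` coincidences, so these cases contribute at most a sum of terms `(C d ^ 4 E) ^ a`, which tends to
`0` since `d ^ 4 E = O(1 / d)`. In the long cases the loss of a factor `n ^ 2` is compensated by
`(d ^ 4 E) ^ r`, as `n ≤ 2 ^ r`. The hypothesis on `p` ensures that the edges meeting a pattern, of
which there are `O(√n log n)`, leave most vertices unexposed.
-/

open scoped Classical

/-- The number of edges of a graph on `Fin n`. -/
noncomputable def edgeCount {n : ℕ} (G : SimpleGraph (Fin n)) : ℕ := G.edgeFinset.card

/-- The probability of the graph `G` under the Erdős–Rényi `G(n,p)` distribution. -/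
noncomputable def gnpWeight (n : ℕ) (p : ℝ) (G : SimpleGraph (Fin n)) : ℝ :=
  p ^ edgeCount G * (1 - p) ^ (n.choose 2 - edgeCount G)

/-- The probability of a set `A` of graphs under the `G(n,p)` distribution. -/
noncomputable def gnpProb (n : ℕ) (p : ℝ) (A : Set (SimpleGraph (Fin n))) : ℝ :=
  ∑ G : SimpleGraph (Fin n), if G ∈ A then gnpWeight n p G else 0

/-- The vertex set of the 2-core of `G`: the largest set of vertices inducing a
subgraph of minimum degree at least 2 (the union of all such sets). -/
def twoCore {V : Type*} (G : SimpleGraph V) : Set V :=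
  ⋃₀ {S : Set V | ∀ v ∈ S, 2 ≤ ({u ∈ S | G.Adj v u} : Set V).ncard}

/-! ### Random subsets of a finite set -/

/-- The real-valued indicator of a proposition. -/
noncomputable def ind (P : Prop) : ℝ := if P then 1 else 0

lemma ind_nonneg (P : Prop) : 0 ≤ ind P := by unfold ind; split_ifs <;> norm_num

lemma ind_le_one (P : Prop) : ind P ≤ 1 := by unfold ind; split_ifs <;> norm_num

lemma ind_true {P : Prop} (h : P) : ind P = 1 := by simp [ind, h]

lemma ind_false {P : Prop} (h : ¬ P) : ind P = 0 := by simp [ind, h]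

lemma ind_mono {P Q : Prop} (h : P → Q) : ind P ≤ ind Q := by
  by_cases hP : P
  · rw [ind_true hP, ind_true (h hP)]
  · rw [ind_false hP]; exact ind_nonneg Q

/-- The expectation of `f F` when `F` is the random subset of `U` that contains each element of
`U` independently with probability `p`. -/
noncomputable def ex {α : Type*} (p : ℝ) (U : Finset α) (f : Finset α → ℝ) : ℝ :=
  ∑ F ∈ U.powerset, p ^ F.card * (1 - p) ^ (U.card - F.card) * f F

section Ex
variable {α : Type*} {p : ℝ}

lemma ex_congr {U : Finset α} {f g : Finset α → ℝ} (h : ∀ F ⊆ U, f F = g F) :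
    ex p U f = ex p U g := by
  unfold ex
  refine Finset.sum_congr rfl fun F hF => ?_
  rw [h F (Finset.mem_powerset.1 hF)]

lemma ex_mono (hp0 : 0 ≤ p) (hp1 : p ≤ 1) {U : Finset α} {f g : Finset α → ℝ}
    (h : ∀ F ⊆ U, f F ≤ g F) : ex p U f ≤ ex p U g := by
  unfold ex
  refine Finset.sum_le_sum fun F hF => ?_
  have : 0 ≤ 1 - p := by linarith
  exact mul_le_mul_of_nonneg_left (h F (Finset.mem_powerset.1 hF)) (by positivity)

lemma ex_nonneg (hp0 : 0 ≤ p) (hp1 : p ≤ 1) {U : Finset α} {f : Finset α → ℝ}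
    (h : ∀ F ⊆ U, 0 ≤ f F) : 0 ≤ ex p U f := by
  unfold ex
  refine Finset.sum_nonneg fun F hF => ?_
  have : 0 ≤ 1 - p := by linarith
  exact mul_nonneg (by positivity) (h F (Finset.mem_powerset.1 hF))

lemma ex_pow (U : Finset α) (x : ℝ) :
    ex p U (fun F => x ^ F.card) = (p * x + (1 - p)) ^ U.card := by
  unfold ex
  rw [← Finset.sum_pow_mul_eq_add_pow]
  refine Finset.sum_congr rfl fun F _ => ?_
  rw [mul_pow]; ring

lemma ex_const_mul (U : Finset α) (c : ℝ) (f : Finset α → ℝ) :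
    ex p U (fun F => c * f F) = c * ex p U f := by
  unfold ex
  rw [Finset.mul_sum]
  exact Finset.sum_congr rfl fun F _ => by ring

lemma ex_one (U : Finset α) : ex p U (fun _ => 1) = 1 := by
  have := ex_pow (p := p) U 1
  simpa using this

lemma ex_const (U : Finset α) (c : ℝ) : ex p U (fun _ => c) = c := by
  have := ex_const_mul (p := p) U c (fun _ => 1)
  simpa [ex_one] using this

lemma ex_mul_const (U : Finset α) (c : ℝ) (f : Finset α → ℝ) :
    ex p U (fun F => f F * c) = ex p U f * c := by
  rw [mul_comm, ← ex_const_mul]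
  exact ex_congr fun F _ => mul_comm _ _

lemma ex_sum {ι : Type*} (U : Finset α) (s : Finset ι) (f : ι → Finset α → ℝ) :
    ex p U (fun F => ∑ i ∈ s, f i F) = ∑ i ∈ s, ex p U (f i) := by
  unfold ex
  rw [Finset.sum_comm]
  exact Finset.sum_congr rfl fun F _ => by rw [Finset.mul_sum]

lemma ex_sub (U : Finset α) (f g : Finset α → ℝ) :
    ex p U (fun F => f F - g F) = ex p U f - ex p U g := by
  unfold ex
  rw [← Finset.sum_sub_distrib]
  exact Finset.sum_congr rfl fun F _ => by ring

variable [DecidableEq α]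

/-- Fubini: the restrictions of the random set to disjoint ground sets are independent. -/
lemma ex_union {U W : Finset α} (h : Disjoint U W) (f : Finset α → ℝ) :
    ex p (U ∪ W) f = ex p U (fun A => ex p W (fun B => f (A ∪ B))) := by
  unfold ex
  simp_rw [Finset.mul_sum]
  rw [← Finset.sum_product']
  symm
  refine Finset.sum_bij' (fun x _ => x.1 ∪ x.2) (fun F _ => (F ∩ U, F ∩ W)) ?_ ?_ ?_ ?_ ?_
  · rintro ⟨A, B⟩ hx
    simp only [Finset.mem_product, Finset.mem_powerset] at hx ⊢
    exact Finset.union_subset_union hx.1 hx.2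
  · intro F _
    simp [Finset.inter_subset_right]
  · rintro ⟨A, B⟩ hx
    simp only [Finset.mem_product, Finset.mem_powerset] at hx
    have h1 : B ∩ U = ∅ := Finset.disjoint_iff_inter_eq_empty.1 (h.symm.mono_left hx.2)
    have h2 : A ∩ W = ∅ := Finset.disjoint_iff_inter_eq_empty.1 (h.mono_left hx.1)
    simp [Finset.union_inter_distrib_right, h1, h2, Finset.inter_eq_left.2 hx.1,
      Finset.inter_eq_left.2 hx.2]
  · intro F hF
    simp only [Finset.mem_powerset] at hF
    simp [← Finset.inter_union_distrib_left, Finset.inter_eq_left.2 hF]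
  · rintro ⟨A, B⟩ hx
    simp only [Finset.mem_product, Finset.mem_powerset] at hx
    have hd : Disjoint A B := h.mono hx.1 hx.2
    simp only
    rw [Finset.card_union_of_disjoint h, Finset.card_union_of_disjoint hd]
    have h1 := Finset.card_le_card hx.1
    have h2 := Finset.card_le_card hx.2
    rw [show U.card + W.card - (A.card + B.card) = (U.card - A.card) + (W.card - B.card) by omega,
      pow_add, pow_add]
    ring

/-- The expectation of a function that only sees part of the ground set. -/
lemma ex_restrict {U W : Finset α} (h : W ⊆ U) (f : Finset α → ℝ) :
    ex p U (fun F => f (F ∩ W)) = ex p W f := by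
  have hU : U = W ∪ (U \ W) := by rw [Finset.union_sdiff_of_subset h]
  rw [hU, ex_union Finset.disjoint_sdiff]
  refine ex_congr fun A hA => ?_
  rw [← ex_const (p := p) (U \ W) (f A)]
  refine ex_congr fun B hB => ?_
  congr 1
  ext e
  simp only [Finset.mem_inter, Finset.mem_union]
  constructor
  · rintro ⟨h1 | h1, h2⟩
    · exact h1
    · exact absurd h2 (Finset.mem_sdiff.1 (hB h1)).2
  · intro h1
    exact ⟨Or.inl h1, hA h1⟩

lemma ex_prod {ι : Type*} [DecidableEq ι] (I : Finset ι) (U : ι → Finset α)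
    (hU : (I : Set ι).PairwiseDisjoint U) (f : ι → Finset α → ℝ) :
    ex p (I.biUnion U) (fun F => ∏ i ∈ I, f i (F ∩ U i)) = ∏ i ∈ I, ex p (U i) (f i) := by
  induction I using Finset.induction_on with
  | empty => simp [ex]
  | insert a I ha ih =>
    have hd : Disjoint (U a) (I.biUnion U) := by
      rw [Finset.disjoint_biUnion_right]
      intro i hi
      exact hU (by simp) (by simp [hi]) (by rintro rfl; exact ha hi)
    rw [Finset.biUnion_insert, ex_union hd, Finset.prod_insert ha,
      ← ih (hU.subset (by simp)), ← ex_mul_const]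
    refine ex_congr fun A hA => ?_
    rw [← ex_const_mul]
    refine ex_congr fun B hB => ?_
    rw [Finset.prod_insert ha]
    have h1 : (A ∪ B) ∩ U a = A := by
      have : B ∩ U a = ∅ := Finset.disjoint_iff_inter_eq_empty.1 (hd.symm.mono_left hB)
      rw [Finset.union_inter_distrib_right, this, Finset.union_empty, Finset.inter_eq_left.2 hA]
    rw [h1]
    congr 1
    refine Finset.prod_congr rfl fun i hi => ?_
    have : A ∩ U i = ∅ := by
      refine Finset.disjoint_iff_inter_eq_empty.1 (Disjoint.mono hA le_rfl ?_)
      exact Finset.disjoint_biUnion_right _ _ _ |>.1 hd i hi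
    rw [Finset.union_inter_distrib_right, this, Finset.empty_union]

lemma ex_subset {U H : Finset α} (h : H ⊆ U) :
    ex p U (fun F => ind (H ⊆ F)) = p ^ H.card := by
  have h1 : ex p U (fun F => ind (H ⊆ F)) = ex p U (fun F => ind (H ⊆ F ∩ H)) :=
    ex_congr fun F _ => by
      congr 1
      simp [Finset.subset_inter_iff]
  rw [h1, ex_restrict h (fun F => ind (H ⊆ F)), ex, Finset.sum_eq_single H]
  · simp [ind]
  · intro F hF hne
    rw [ind_false, mul_zero]
    intro hHF
    exact hne (Finset.Subset.antisymm (Finset.mem_powerset.1 hF) hHF)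
  · simp

end Ex

/-! ### Residues of binomial random variables -/

lemma norm_one_sub_add_mul_le {p : ℝ} (hp0 : 0 ≤ p) (hp : p ≤ 1 / 2) {z : ℂ} (hz : ‖z‖ = 1) :
    ‖(p : ℂ) * z + (1 - p)‖ ≤ Real.exp (-((1 - z.re) / 2) * p) := by
  have h1 : ‖(p : ℂ) * z + (1 - p)‖ ^ 2 = 1 - 2 * p * (1 - p) * (1 - z.re) := by
    have hz2 : z.re * z.re + z.im * z.im = 1 := by
      rw [← Complex.normSq_apply, Complex.normSq_eq_norm_sq, hz]; norm_num
    rw [← Complex.normSq_eq_norm_sq, Complex.normSq_apply]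
    simp
    linear_combination p ^ 2 * hz2
  have hre : z.re ≤ 1 := hz ▸ Complex.re_le_norm z
  have h2 : ‖(p : ℂ) * z + (1 - p)‖ ^ 2 ≤ Real.exp (-((1 - z.re) / 2) * p) ^ 2 := by
    rw [h1, ← Real.exp_nat_mul]
    refine le_trans ?_ (Real.add_one_le_exp _)
    push_cast
    nlinarith [mul_nonneg (mul_nonneg hp0 (by linarith : 0 ≤ 1 - z.re))
      (by linarith : 0 ≤ 1 - 2 * p)]
  exact le_of_sq_le_sq h2 (Real.exp_pos _).le

/-- The binomial distribution modulo `Q` is almost uniform, by finite Fourier analysis: all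
nontrivial Fourier coefficients are at most `exp (-κ p N)`. -/
lemma exists_ex_modEq_le (Q : ℕ) (hQ : 0 < Q) : ∃ κ : ℝ, 0 < κ ∧
    ∀ (α : Type) (p : ℝ), 0 ≤ p → p ≤ 1 / 2 → ∀ (U : Finset α) (f c : ℕ),
      ex p U (fun F => ind (f + F.card ≡ c [MOD Q])) ≤
        (1 + Q * Real.exp (-κ * p * U.card)) / Q := by
  obtain ⟨ω, hω⟩ : ∃ ω : ℂ, IsPrimitiveRoot ω Q := ⟨_, Complex.isPrimitiveRoot_exp Q hQ.ne'⟩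
  have hnorm : ‖ω‖ = 1 := hω.norm'_eq_one hQ.ne'
  have hnormj : ∀ j : ℕ, ‖ω ^ j‖ = 1 := fun j => by rw [norm_pow, hnorm, one_pow]
  obtain ⟨κ, hκ, hκj⟩ : ∃ κ : ℝ, 0 < κ ∧ ∀ j ∈ Finset.Ico 1 Q, κ ≤ (1 - (ω ^ j).re) / 2 := by
    rcases (Finset.Ico 1 Q).eq_empty_or_nonempty with h | h
    · exact ⟨1, one_pos, by simp [h]⟩
    · obtain ⟨i, hi, hmin⟩ := Finset.exists_min_image _ (fun j : ℕ => (1 - (ω ^ j).re) / 2) h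
      refine ⟨_, ?_, hmin⟩
      have h1 : (ω ^ i).re ≤ 1 := hnormj i ▸ Complex.re_le_norm _
      rcases h1.lt_or_eq with h2 | h2
      · linarith
      · exfalso
        rw [Finset.mem_Ico] at hi
        have h3 : ω ^ i = 1 := by
          have h4 := Complex.normSq_eq_norm_sq (ω ^ i)
          rw [hnormj, Complex.normSq_apply, h2] at h4
          have h5 : (ω ^ i).im = 0 := by nlinarith
          exact Complex.ext h2 h5
        exact hω.pow_ne_one_of_pos_of_lt (by omega) hi.2 h3
  refine ⟨κ, hκ, fun α p hp0 hp U f c => ?_⟩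
  have hQ' : (Q : ℂ) ≠ 0 := by exact_mod_cast hQ.ne'
  -- `c * (Q - 1)` represents `-c` modulo `Q`.
  have key : ∀ F : Finset α, (Q : ℂ) * (ind (f + F.card ≡ c [MOD Q]) : ℝ) =
      ∑ j ∈ Finset.range Q, (ω ^ j) ^ (f + F.card + c * (Q - 1)) := by
    intro F
    have hsum : ∑ j ∈ Finset.range Q, (ω ^ j) ^ (f + F.card + c * (Q - 1)) =
        ∑ j ∈ Finset.range Q, (ω ^ (f + F.card + c * (Q - 1))) ^ j :=
      Finset.sum_congr rfl fun j _ => by rw [← pow_mul, ← pow_mul, mul_comm]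
    have hc : c + c * (Q - 1) = c * Q := by
      obtain ⟨q, rfl⟩ : ∃ q, Q = q + 1 := ⟨Q - 1, by omega⟩
      simp; ring
    rw [hsum]
    by_cases h : f + F.card ≡ c [MOD Q]
    · have h1 : ω ^ (f + F.card + c * (Q - 1)) = 1 := by
        rw [hω.pow_eq_one_iff_dvd]
        have := (h.add_right (c * (Q - 1)))
        rw [hc] at this
        exact (Nat.modEq_zero_iff_dvd).1 (this.trans (by simp [Nat.ModEq]))
      rw [ind_true h, h1]; simp
    · have h1 : ω ^ (f + F.card + c * (Q - 1)) ≠ 1 := by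
        intro h1
        rw [hω.pow_eq_one_iff_dvd, ← Nat.modEq_zero_iff_dvd] at h1
        apply h
        have h2 : f + F.card + c * (Q - 1) ≡ c + c * (Q - 1) [MOD Q] :=
          h1.trans (by rw [hc]; simp [Nat.ModEq])
        exact Nat.ModEq.add_right_cancel' _ h2
      rw [ind_false h, geom_sum_eq h1, ← pow_mul, mul_comm _ Q, pow_mul, hω.pow_eq_one]
      simp
  have hfour : (Q : ℂ) * ((ex p U (fun F => ind (f + F.card ≡ c [MOD Q])) : ℝ) : ℂ) =
      ∑ j ∈ Finset.range Q, (ω ^ j) ^ (f + c * (Q - 1)) *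
        ((p : ℂ) * ω ^ j + (1 - p)) ^ U.card := by
    unfold ex
    push_cast
    rw [Finset.mul_sum]
    have : ∀ F ∈ U.powerset, (Q : ℂ) * ((p : ℂ) ^ F.card * (1 - (p : ℂ)) ^ (U.card - F.card) *
        ((ind (f + F.card ≡ c [MOD Q]) : ℝ) : ℂ)) =
        ∑ j ∈ Finset.range Q, (ω ^ j) ^ (f + c * (Q - 1)) *
          (((p : ℂ) * ω ^ j) ^ F.card * (1 - (p : ℂ)) ^ (U.card - F.card)) := by
      intro F _
      rw [mul_left_comm, key F, Finset.mul_sum]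
      refine Finset.sum_congr rfl fun j _ => ?_
      rw [mul_pow, pow_add, pow_add, pow_add]
      ring
    rw [Finset.sum_congr rfl this, Finset.sum_comm]
    refine Finset.sum_congr rfl fun j _ => ?_
    rw [← Finset.mul_sum, Finset.sum_pow_mul_eq_add_pow]
  have hQr : (0 : ℝ) < Q := by exact_mod_cast hQ
  rw [le_div_iff₀ hQr]
  set E := ex p U (fun F => ind (f + F.card ≡ c [MOD Q])) with hE
  have hnn : E * Q ≤ ‖(Q : ℂ) * ((E : ℝ) : ℂ)‖ := by
    rw [norm_mul, Complex.norm_natCast, Complex.norm_real, mul_comm]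
    exact mul_le_mul_of_nonneg_left (le_abs_self _) hQr.le
  refine hnn.trans ?_
  rw [hfour]
  refine (norm_sum_le _ _).trans ?_
  have hterm : ∀ j ∈ Finset.range Q,
      ‖(ω ^ j) ^ (f + c * (Q - 1)) * ((p : ℂ) * ω ^ j + (1 - p)) ^ U.card‖ ≤
        (if j = 0 then 1 else 0) + Real.exp (-κ * p * U.card) := by
    intro j hj
    rw [norm_mul, norm_pow, hnormj, one_pow, one_mul, norm_pow]
    by_cases hj0 : j = 0
    · subst hj0
      simp
      exact (Real.exp_pos _).le
    · rw [if_neg hj0, zero_add]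
      have h1 := norm_one_sub_add_mul_le hp0 hp (hnormj j)
      have h2 := hκj j (by rw [Finset.mem_Ico]; exact ⟨by omega, Finset.mem_range.1 hj⟩)
      calc _ ≤ (Real.exp (-((1 - (ω ^ j).re) / 2) * p)) ^ U.card := by gcongr
        _ ≤ (Real.exp (-κ * p)) ^ U.card := by
          gcongr
        _ = _ := by rw [← Real.exp_nat_mul]; congr 1; ring
  refine (Finset.sum_le_sum hterm).trans ?_
  rw [Finset.sum_add_distrib]
  simp [hQ]

/-- A prescribed pattern of the `M` lowest binary digits fixes the residue modulo `2 ^ M`. -/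
lemma exists_ex_testBit_le (M : ℕ) : ∃ κ : ℝ, 0 < κ ∧
    ∀ (α : Type) (p : ℝ), 0 ≤ p → p ≤ 1 / 2 → ∀ (U : Finset α) (f : ℕ) (b : ℕ → Prop),
      ex p U (fun F => ind (∀ j < M, (f + F.card).testBit j = true ↔ b j)) ≤
        (1 + 2 ^ M * Real.exp (-κ * p * U.card)) / 2 ^ M := by
  obtain ⟨κ, hκ, h⟩ := exists_ex_modEq_le (2 ^ M) (by positivity)
  refine ⟨κ, hκ, fun α p hp0 hp U f b => ?_⟩
  by_cases hF : ∃ F₀ : Finset α, ∀ j < M, (f + F₀.card).testBit j = true ↔ b j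
  · obtain ⟨F₀, hF₀⟩ := hF
    have := h α p hp0 hp U f (f + F₀.card)
    push_cast at this
    refine le_trans (ex_mono hp0 (by linarith) fun F _ => ind_mono fun hb => ?_) this
    refine Nat.eq_of_testBit_eq fun j => ?_
    rw [Nat.testBit_mod_two_pow, Nat.testBit_mod_two_pow]
    by_cases hj : j < M
    · have := (hb j hj).trans (hF₀ j hj).symm
      simp only [hj, decide_true, Bool.true_and]
      exact Bool.eq_iff_iff.2 this
    · simp [hj]
  · push Not at hF
    have : ex p U (fun F => ind (∀ j < M, (f + F.card).testBit j = true ↔ b j)) = 0 := by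
      rw [← ex_const (p := p) U 0]
      refine ex_congr fun F _ => ind_false ?_
      intro hb
      obtain ⟨j, hj, h1⟩ := hF F
      have := hb j hj
      tauto
    rw [this]
    positivity

/-! ### Degree statistics of a random edge set -/

set_option linter.unusedSectionVars false

section Graph
variable {V : Type} [Fintype V] [DecidableEq V]

/-- The neighbours of `v` in the graph with edge set `F`. -/
def nb (F : Finset (Sym2 V)) (v : V) : Finset V := Finset.univ.filter (fun u => s(v, u) ∈ F)

/-- The degree of `v` in the graph with edge set `F`. -/
def dg (F : Finset (Sym2 V)) (v : V) : ℕ := (nb F v).card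

/-- The number of neighbours of `v` whose degree has binary digit `1` in position `j`. The vector of
these numbers for `j < M` is the isomorphism invariant used to tell vertices apart. -/
def cnt (F : Finset (Sym2 V)) (j : ℕ) (v : V) : ℕ :=
  ((nb F v).filter (fun u => (dg F u).testBit j = true)).card

/-- All possible edges on `V`. -/
def allE (V : Type) [Fintype V] [DecidableEq V] : Finset (Sym2 V) :=
  Finset.univ.filter (fun e => ¬ e.IsDiag)

/-- The possible edges inside `W`. -/
def inE (W : Finset V) : Finset (Sym2 V) := (allE V).filter (fun e => ∀ v ∈ e, v ∈ W)

/-- The possible edges avoiding `W`. -/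
def outE (W : Finset V) : Finset (Sym2 V) := (allE V).filter (fun e => ∀ v ∈ e, v ∉ W)

/-- The possible edges between `u` and `W`. -/
def row (W : Finset V) (u : V) : Finset (Sym2 V) := W.image (fun w => s(w, u))

/-- The possible edges between `W` and its complement. -/
def bdE (W : Finset V) : Finset (Sym2 V) := Wᶜ.biUnion (row W)

/-- The private neighbours of `z` with respect to `W`: the vertices outside `W` whose only neighbour
in `W` is `z`. -/
def priv (A : Finset (Sym2 V)) (W : Finset V) (z : V) : Finset V :=
  Wᶜ.filter (fun u => s(z, u) ∈ A ∧ ∀ w ∈ W, s(w, u) ∈ A → w = z)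

lemma mem_nb {F : Finset (Sym2 V)} {u v : V} : u ∈ nb F v ↔ s(v, u) ∈ F := by
  simp [nb]

lemma mem_outE {W : Finset V} {u v : V} : s(u, v) ∈ outE W ↔ u ≠ v ∧ u ∉ W ∧ v ∉ W := by
  simp [outE, allE]

lemma mem_inE {W : Finset V} {u v : V} : s(u, v) ∈ inE W ↔ u ≠ v ∧ u ∈ W ∧ v ∈ W := by
  simp [inE, allE]

lemma mem_bdE {W : Finset V} {u v : V} :
    s(u, v) ∈ bdE W ↔ (u ∈ W ∧ v ∉ W) ∨ (v ∈ W ∧ u ∉ W) := by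
  simp only [bdE, row, Finset.mem_biUnion, Finset.mem_compl, Finset.mem_image, Sym2.eq_iff]
  constructor
  · rintro ⟨a, ha, b, hb, ⟨rfl, rfl⟩ | ⟨rfl, rfl⟩⟩ <;> tauto
  · rintro (⟨h1, h2⟩ | ⟨h1, h2⟩)
    · exact ⟨v, h2, u, h1, Or.inl ⟨rfl, rfl⟩⟩
    · exact ⟨u, h2, v, h1, Or.inr ⟨rfl, rfl⟩⟩

lemma nb_union (A B : Finset (Sym2 V)) (v : V) : nb (A ∪ B) v = nb A v ∪ nb B v := by
  ext u; simp [mem_nb]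

lemma nb_union_out {A B : Finset (Sym2 V)} {W : Finset V} (hB : B ⊆ outE W) {w : V} (hw : w ∈ W) :
    nb (A ∪ B) w = nb A w := by
  ext u
  simp only [mem_nb, Finset.mem_union]
  constructor
  · rintro (h | h)
    · exact h
    · exact absurd hw (mem_outE.1 (hB h)).2.1
  · exact Or.inl

/-- If the edges `A` meeting `W` are given, then the probability that each `z ∈ Z` has the same
statistics as `ρ z` is at most `η` to the number of `z` with at least `k` private neighbours, where
`η = β ^ k * (k.choose (k / 2)) ^ M`. Only the edges from `k` private neighbours of each such `z` to
the vertices at distance at least two from `W` are used: the degrees of distinct private neighbours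
depend on disjoint sets of such edges, and prescribing the statistics of `z` amounts to prescribing
for each `j < M` how many of the `k` chosen degrees have digit `1` in position `j`. -/
lemma cond_bound {p : ℝ} (hp0 : 0 ≤ p) (hp1 : p ≤ 1) {N M : ℕ} {β : ℝ}
    (hβ : ∀ (U : Finset (Sym2 V)) (f : ℕ) (b : ℕ → Prop), N ≤ U.card →
      ex p U (fun F => ind (∀ j < M, (f + F.card).testBit j = true ↔ b j)) ≤ β)
    (A : Finset (Sym2 V)) (W Z : Finset V) (hA : ∀ e ∈ A, ∃ w ∈ W, w ∈ e) (hZ : Z ⊆ W)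
    (ρ : V → V) (hρ : ∀ z ∈ Z, ρ z ∈ W ∧ ρ z ∉ Z) (m k : ℕ) (hβ0 : 0 ≤ β)
    (hm : N + W.card * (m + 1) ≤ Fintype.card V) :
    ex p (outE W) (fun B => ind ((∀ w ∈ W, dg (A ∪ B) w ≤ m) ∧
      ∀ z ∈ Z, ∀ j < M, cnt (A ∪ B) j z = cnt (A ∪ B) j (ρ z))) ≤
    ∏ z ∈ Z, (if k ≤ (priv A W z).card then (β ^ k * (k.choose (k / 2) : ℝ) ^ M) else 1) := by
  have hη0 : 0 ≤ β ^ k * (k.choose (k / 2) : ℝ) ^ M := by positivity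
  set Zg := Z.filter (fun z => k ≤ (priv A W z).card) with hZg
  have hRHS : ∏ z ∈ Z, (if k ≤ (priv A W z).card then (β ^ k * (k.choose (k / 2) : ℝ) ^ M) else 1)
      = (β ^ k * (k.choose (k / 2) : ℝ) ^ M) ^ Zg.card := by
    rw [← Finset.prod_filter, Finset.prod_const]
  rw [hRHS]
  have hC : ∀ z, ∃ C ⊆ priv A W z, k ≤ (priv A W z).card → C.card = k := by
    intro z
    by_cases h : k ≤ (priv A W z).card
    · obtain ⟨C, h1, h2⟩ := Finset.exists_subset_card_eq h
      exact ⟨C, h1, fun _ => h2⟩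
    · exact ⟨∅, by simp, fun h' => absurd h' h⟩
  choose C hCp hCk using hC
  have hCk' : ∀ z ∈ Zg, (C z).card = k := fun z hz => hCk z (Finset.mem_filter.1 hz).2
  have hCW : ∀ z, ∀ u ∈ C z, u ∉ W ∧ s(z, u) ∈ A ∧ ∀ w ∈ W, s(w, u) ∈ A → w = z := by
    intro z u hu
    have := hCp z hu
    simpa [priv] using this
  have hZW : ∀ z ∈ Zg, z ∈ W := fun z hz => hZ (Finset.mem_filter.1 hz).1
  set T := Wᶜ.filter (fun u => ∃ w ∈ W, s(w, u) ∈ A) with hT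
  set U := Wᶜ \ T with hU
  set Call := Zg.biUnion C with hCall
  have hCallT : Call ⊆ T := by
    intro u hu
    obtain ⟨z, hz, huz⟩ := Finset.mem_biUnion.1 hu
    obtain ⟨h1, h2, -⟩ := hCW z u huz
    simp only [hT, Finset.mem_filter, Finset.mem_compl]
    exact ⟨h1, z, hZW z hz, h2⟩
  by_cases hUN : N ≤ U.card
  swap
  · -- Small degrees inside `W` force `U` to be large.
    have : ex p (outE W) (fun B => ind ((∀ w ∈ W, dg (A ∪ B) w ≤ m) ∧
      ∀ z ∈ Z, ∀ j < M, cnt (A ∪ B) j z = cnt (A ∪ B) j (ρ z))) = 0 := by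
      rw [← ex_const (p := p) (outE W) 0]
      refine ex_congr fun B hB => ind_false ?_
      rintro ⟨hdeg, -⟩
      apply hUN
      have h1 : T ⊆ W.biUnion (nb A) := by
        intro u hu
        obtain ⟨w, hw, h⟩ := (Finset.mem_filter.1 hu).2
        exact Finset.mem_biUnion.2 ⟨w, hw, mem_nb.2 h⟩
      have h2 : T.card ≤ W.card * m := by
        refine (Finset.card_le_card h1).trans (Finset.card_biUnion_le_card_mul _ _ _ ?_)
        intro w hw
        have := hdeg w hw
        rwa [dg, nb_union_out hB hw] at this
      have h3 : Wᶜ.card ≤ U.card + T.card := by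
        rw [hU]; exact Nat.le_add_of_sub_le (Finset.le_card_sdiff T Wᶜ)
      have h4 := Finset.card_compl W
      have h5 := Finset.card_le_univ W
      rw [mul_add, mul_one] at hm
      omega
    rw [this]
    positivity
  set star : V → Finset (Sym2 V) := fun u => U.image (fun v => s(u, v)) with hstar
  set St := Call.biUnion star with hSt
  have hUW : ∀ v ∈ U, v ∉ W ∧ v ∉ T := by
    intro v hv
    simpa [hU] using hv
  have hStmem : ∀ e ∈ St, ∃ u ∈ Call, ∃ v ∈ U, e = s(u, v) := by
    intro e he
    obtain ⟨u, hu, h⟩ := Finset.mem_biUnion.1 he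
    obtain ⟨v, hv, h⟩ := Finset.mem_image.1 h
    exact ⟨u, hu, v, hv, h.symm⟩
  have hTW : ∀ u ∈ T, u ∉ W := fun u hu => by
    have := (Finset.mem_filter.1 hu).1
    simpa using this
  have hStout : St ⊆ outE W := by
    intro e he
    obtain ⟨u, hu, v, hv, rfl⟩ := hStmem e he
    rw [mem_outE]
    refine ⟨?_, hTW u (hCallT hu), (hUW v hv).1⟩
    rintro rfl
    exact (hUW u hv).2 (hCallT hu)
  have hdisj : (Call : Set V).PairwiseDisjoint star := by
    intro u hu u' hu' hne
    rw [Function.onFun, Finset.disjoint_left]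
    intro e he he'
    obtain ⟨v, hv, rfl⟩ := Finset.mem_image.1 he
    obtain ⟨v', hv', h⟩ := Finset.mem_image.1 he'
    rcases Sym2.eq_iff.1 h with ⟨h1, h2⟩ | ⟨h1, h2⟩
    · exact hne h1.symm
    · exact (hUW v hv).2 (h1 ▸ hCallT hu')
  have hstarcard : ∀ u ∈ Call, N ≤ (star u).card := by
    intro u hu
    rw [hstar, Finset.card_image_of_injective _ (fun a b h => Sym2.congr_right.1 h)]
    exact hUN
  have hout : outE W = (outE W \ St) ∪ St := (Finset.sdiff_union_of_subset hStout).symm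
  rw [hout, ex_union Finset.sdiff_disjoint]
  rw [← ex_const (p := p) (outE W \ St) ((β ^ k * (k.choose (k / 2) : ℝ) ^ M) ^ Zg.card)]
  refine ex_mono hp0 hp1 fun B hB => ?_
  have hBout : B ⊆ outE W := hB.trans Finset.sdiff_subset
  have hBSt : ∀ e ∈ B, e ∉ St := fun e he => (Finset.mem_sdiff.1 (hB he)).2
  set A₁ := A ∪ B with hA₁
  -- The number of digits `1` that the chosen private neighbours have to contribute.
  set t : V → ℕ → ℕ := fun z j =>
    ((nb A (ρ z)).filter (fun u => (dg A₁ u).testBit j = true)).card -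
    ((nb A z \ C z).filter (fun u => (dg A₁ u).testBit j = true)).card with ht
  set Dset : Finset (V × Fin M → Finset V) := Fintype.piFinset
    (fun q : V × Fin M => if q.1 ∈ Zg then Finset.powersetCard (t q.1 q.2) (C q.1) else {∅})
    with hDset
  set b : V → (V × Fin M → Finset V) → ℕ → Prop := fun u D j =>
    ∃ h : j < M, ∃ z ∈ Zg, u ∈ D (z, ⟨j, h⟩) with hb
  have hpoint : ∀ F ⊆ St, ind ((∀ w ∈ W, dg (A ∪ (B ∪ F)) w ≤ m) ∧
      ∀ z ∈ Z, ∀ j < M, cnt (A ∪ (B ∪ F)) j z = cnt (A ∪ (B ∪ F)) j (ρ z)) ≤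
      ∑ D ∈ Dset, ∏ u ∈ Call,
        ind (∀ j < M, (dg A₁ u + (F ∩ star u).card).testBit j = true ↔ b u D j) := by
    intro F hF
    by_cases hev : (∀ w ∈ W, dg (A ∪ (B ∪ F)) w ≤ m) ∧
      ∀ z ∈ Z, ∀ j < M, cnt (A ∪ (B ∪ F)) j z = cnt (A ∪ (B ∪ F)) j (ρ z)
    swap
    · rw [ind_false hev]
      exact Finset.sum_nonneg fun D _ => Finset.prod_nonneg fun u _ => ind_nonneg _
    rw [ind_true hev]
    have hBF : B ∪ F ⊆ outE W := Finset.union_subset hBout (hF.trans hStout)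
    have hnbW : ∀ w ∈ W, nb (A ∪ (B ∪ F)) w = nb A w := fun w hw => nb_union_out hBF hw
    have hdg1 : ∀ v, v ∉ Call → v ∉ U → dg (A ∪ (B ∪ F)) v = dg A₁ v := by
      intro v hv1 hv2
      rw [← Finset.union_assoc, ← hA₁, dg, nb_union, dg]
      have : nb F v = ∅ := by
        ext x
        simp only [mem_nb, Finset.notMem_empty, iff_false]
        intro hx
        obtain ⟨u, hu, y, hy, h⟩ := hStmem _ (hF hx)
        rcases Sym2.eq_iff.1 h with ⟨rfl, rfl⟩ | ⟨rfl, rfl⟩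
        · exact hv1 hu
        · exact hv2 hy
      rw [this, Finset.union_empty]
    have hdg2 : ∀ u ∈ Call, dg (A ∪ (B ∪ F)) u = dg A₁ u + (F ∩ star u).card := by
      intro u hu
      have hFs : F ∩ star u = (nb F u).image (fun v => s(u, v)) := by
        ext e
        simp only [Finset.mem_inter, hstar, Finset.mem_image, mem_nb]
        constructor
        · rintro ⟨h1, v, hv, rfl⟩
          exact ⟨v, h1, rfl⟩
        · rintro ⟨v, hv, rfl⟩
          refine ⟨hv, ?_⟩
          obtain ⟨u', hu', y, hy, h⟩ := hStmem _ (hF hv)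
          rcases Sym2.eq_iff.1 h with ⟨rfl, rfl⟩ | ⟨rfl, rfl⟩
          · exact ⟨v, hy, rfl⟩
          · exact absurd (hCallT hu) (hUW _ hy).2
      rw [hFs, Finset.card_image_of_injective _ (fun a b h => Sym2.congr_right.1 h),
        ← Finset.union_assoc, ← hA₁, dg, nb_union, dg, Finset.card_union_of_disjoint]
      rw [Finset.disjoint_left]
      intro x hx hx'
      rw [mem_nb] at hx hx'
      rcases Finset.mem_union.1 hx with h | h
      · obtain ⟨w, hw, hwe⟩ := hA _ h
        have := (Finset.mem_filter.1 (hStout (hF hx'))).2 w hwe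
        exact this hw
      · exact hBSt _ h (hF hx')
    have hnbWU : ∀ w ∈ W, ∀ u ∈ nb A w, u ∉ U := by
      intro w hw u hu huU
      obtain ⟨h1, h2⟩ := hUW u huU
      apply h2
      simp only [hT, Finset.mem_filter, Finset.mem_compl]
      exact ⟨h1, w, hw, mem_nb.1 hu⟩
    set D₀ : V × Fin M → Finset V := fun q => if q.1 ∈ Zg then
      (C q.1).filter (fun u => (dg (A ∪ (B ∪ F)) u).testBit q.2 = true) else ∅ with hD₀
    have hD₀mem : D₀ ∈ Dset := by
      rw [hDset, Fintype.mem_piFinset]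
      rintro ⟨z, j⟩
      by_cases hz : z ∈ Zg
      swap
      · simp [hD₀, hz]
      simp only [hD₀, hz, if_true]
      rw [Finset.mem_powersetCard]
      refine ⟨Finset.filter_subset _ _, ?_⟩
      have hzZ : z ∈ Z := (Finset.mem_filter.1 hz).1
      have h1 := hev.2 z hzZ j j.2
      rw [cnt, cnt, hnbW z (hZ hzZ), hnbW _ (hρ z hzZ).1] at h1
      have h2 : (nb A (ρ z)).filter (fun u => (dg (A ∪ (B ∪ F)) u).testBit j = true) =
          (nb A (ρ z)).filter (fun u => (dg A₁ u).testBit j = true) := by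
        refine Finset.filter_congr fun u hu => ?_
        rw [hdg1 u ?_ (hnbWU _ (hρ z hzZ).1 u hu)]
        intro huC
        obtain ⟨z', hz', huz'⟩ := Finset.mem_biUnion.1 huC
        have h3 := (hCW z' u huz').2.2 _ (hρ z hzZ).1 (mem_nb.1 hu)
        exact (hρ z hzZ).2 (h3 ▸ (Finset.mem_filter.1 hz').1)
      have hCsub : C z ⊆ nb A z := fun u hu => mem_nb.2 (hCW z u hu).2.1
      have h3 : ((nb A z).filter (fun u => (dg (A ∪ (B ∪ F)) u).testBit j = true)).card =
          ((nb A z \ C z).filter (fun u => (dg A₁ u).testBit j = true)).card +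
          ((C z).filter (fun u => (dg (A ∪ (B ∪ F)) u).testBit j = true)).card := by
        have h4 : (nb A z \ C z).filter (fun u => (dg A₁ u).testBit j = true) =
            (nb A z \ C z).filter (fun u => (dg (A ∪ (B ∪ F)) u).testBit j = true) := by
          refine Finset.filter_congr fun u hu => ?_
          obtain ⟨hu1, hu2⟩ := Finset.mem_sdiff.1 hu
          rw [hdg1 u ?_ (hnbWU _ (hZ hzZ) u hu1)]
          intro huC
          obtain ⟨z', hz', huz'⟩ := Finset.mem_biUnion.1 huC
          have h3 := (hCW z' u huz').2.2 _ (hZ hzZ) (mem_nb.1 hu1)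
          exact hu2 (h3 ▸ huz')
        rw [h4, ← Finset.card_union_of_disjoint
          (Finset.disjoint_filter_filter Finset.sdiff_disjoint), ← Finset.filter_union,
          Finset.sdiff_union_of_subset hCsub]
      rw [h2, h3] at h1
      simp only [ht]
      omega
    have hone : ∏ u ∈ Call,
        ind (∀ j < M, (dg A₁ u + (F ∩ star u).card).testBit j = true ↔ b u D₀ j) = 1 := by
      refine Finset.prod_eq_one fun u hu => ind_true fun j hj => ?_
      rw [← hdg2 u hu]
      simp only [hb, hD₀]
      constructor
      · intro h
        obtain ⟨z, hz, huz⟩ := Finset.mem_biUnion.1 hu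
        exact ⟨hj, z, hz, by simp [hz, huz, h]⟩
      · rintro ⟨_, z, hz, h⟩
        simp only [hz, if_true, Finset.mem_filter] at h
        exact h.2
    rw [← hone]
    exact Finset.single_le_sum (f := fun D => ∏ u ∈ Call,
        ind (∀ j < M, (dg A₁ u + (F ∩ star u).card).testBit j = true ↔ b u D j))
      (fun D _ => Finset.prod_nonneg fun u _ => ind_nonneg _) hD₀mem
  refine (ex_mono hp0 hp1 hpoint).trans ?_
  rw [ex_sum]
  have hterm : ∀ D ∈ Dset, ex p St (fun F => ∏ u ∈ Call,
      ind (∀ j < M, (dg A₁ u + (F ∩ star u).card).testBit j = true ↔ b u D j)) ≤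
      β ^ (Zg.card * k) := by
    intro D _
    rw [hSt, ex_prod Call star hdisj (fun u F =>
      ind (∀ j < M, (dg A₁ u + F.card).testBit j = true ↔ b u D j))]
    have hcard : Call.card = Zg.card * k := by
      rw [hCall, Finset.card_biUnion, Finset.sum_congr rfl hCk', Finset.sum_const, smul_eq_mul]
      intro z hz z' hz' hne
      rw [Function.onFun, Finset.disjoint_left]
      intro u hu hu'
      exact hne ((hCW z' u hu').2.2 z (hZW z hz) (hCW z u hu).2.1)
    rw [← hcard, ← Finset.prod_const]
    refine Finset.prod_le_prod (fun u _ => ex_nonneg hp0 hp1 fun F _ => ind_nonneg _) ?_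
    intro u hu
    exact hβ _ _ _ (hstarcard u hu)
  refine (Finset.sum_le_sum hterm).trans ?_
  rw [Finset.sum_const, nsmul_eq_mul]
  have hDcard : (Dset.card : ℝ) ≤ ((k.choose (k / 2) : ℝ) ^ M) ^ Zg.card := by
    rw [hDset, Fintype.card_piFinset]
    have h1 : ∀ q : V × Fin M, (if q.1 ∈ Zg then Finset.powersetCard (t q.1 q.2) (C q.1)
        else {∅}).card ≤ if q.1 ∈ Zg then k.choose (k / 2) else 1 := by
      intro q
      split_ifs with h
      · rw [Finset.card_powersetCard, hCk' _ h]
        exact Nat.choose_le_middle _ _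
      · simp
    have h2 := Finset.prod_le_prod' (s := Finset.univ) (fun q _ => h1 q)
    have h3 : ∏ q : V × Fin M, (if q.1 ∈ Zg then k.choose (k / 2) else 1) =
        (k.choose (k / 2) ^ M) ^ Zg.card := by
      set g : V → ℕ := fun x => if x ∈ Zg then k.choose (k / 2) else 1 with hg
      change ∏ q : V × Fin M, g q.1 = _
      rw [Fintype.prod_prod_type]
      simp only [Finset.prod_const, Finset.card_univ, Fintype.card_fin]
      rw [Finset.prod_pow, hg, Finset.prod_ite_mem, Finset.univ_inter, Finset.prod_const, ← pow_mul,
        ← pow_mul, mul_comm]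
    rw [h3] at h2
    exact_mod_cast h2
  calc (Dset.card : ℝ) * β ^ (Zg.card * k) ≤
      ((k.choose (k / 2) : ℝ) ^ M) ^ Zg.card * β ^ (Zg.card * k) := by gcongr
    _ = _ := by rw [mul_pow, mul_comm, mul_comm Zg.card k, pow_mul]

lemma row_card {W : Finset V} (u : V) : (row W u).card = W.card := by
  rw [row, Finset.card_image_of_injective _ (fun a b h => Sym2.congr_left.1 h)]

lemma bdE_disj (W : Finset V) : ((Wᶜ : Finset V) : Set V).PairwiseDisjoint (row W) := by
  intro u hu u' hu' hne
  rw [Function.onFun, Finset.disjoint_left]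
  intro e he he'
  obtain ⟨v, hv, rfl⟩ := Finset.mem_image.1 he
  obtain ⟨v', hv', h⟩ := Finset.mem_image.1 he'
  simp only [Finset.coe_compl, Set.mem_compl_iff, Finset.mem_coe] at hu hu'
  rcases Sym2.eq_iff.1 h with ⟨h1, h2⟩ | ⟨h1, h2⟩
  · exact hne h2.symm
  · exact hu (h1 ▸ hv')

/-- The probability that the only edge between `u` and `W` is the one to a given `z ∈ W`. -/
lemma ex_row_single {p : ℝ} {W : Finset V} (u : V) {z : V} (hz : z ∈ W) :
    ex p (row W u) (fun R => ind (R = {s(z, u)})) = p * (1 - p) ^ (W.card - 1) := by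
  have hmem : s(z, u) ∈ row W u := Finset.mem_image_of_mem _ hz
  rw [ex, Finset.sum_eq_single {s(z, u)}]
  · rw [ind_true rfl, row_card]; simp
  · intro R _ hne
    rw [ind_false hne, mul_zero]
  · intro h
    simp [hmem] at h

lemma ex_row_bound {p : ℝ} (hp0 : 0 ≤ p) (hp1 : p ≤ 1) {W I : Finset V} (hI : I ⊆ W) (u : V) :
    ex p (row W u) (fun R => ∏ z ∈ I,
      (if s(z, u) ∈ R ∧ ∀ w ∈ W, s(w, u) ∈ R → w = z then (1 / 2 : ℝ) else 1)) ≤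
    Real.exp (-(I.card * (p * (1 - p) ^ (W.card - 1)) / 2)) := by
  have h1 : ex p (row W u) (fun R => ∏ z ∈ I,
      (if s(z, u) ∈ R ∧ ∀ w ∈ W, s(w, u) ∈ R → w = z then (1 / 2 : ℝ) else 1)) ≤
      ex p (row W u) (fun R => 1 - 1 / 2 * ∑ z ∈ I, ind (R = {s(z, u)})) := by
    refine ex_mono hp0 hp1 fun R hR => ?_
    by_cases h : ∃ z ∈ I, R = {s(z, u)}
    · obtain ⟨z, hz, rfl⟩ := h
      have hs : ∑ z' ∈ I, ind (({s(z, u)} : Finset (Sym2 V)) = {s(z', u)}) = 1 := by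
        rw [Finset.sum_eq_single z]
        · exact ind_true rfl
        · intro b _ hb
          refine ind_false fun h => hb ?_
          exact (Sym2.congr_left.1 (Finset.singleton_injective h)).symm
        · exact fun h => absurd hz h
      rw [hs]
      have hprod : ∏ z' ∈ I, (if s(z', u) ∈ ({s(z, u)} : Finset (Sym2 V)) ∧
          ∀ w ∈ W, s(w, u) ∈ ({s(z, u)} : Finset (Sym2 V)) → w = z' then (1 / 2 : ℝ) else 1)
          = 1 / 2 := by
        rw [Finset.prod_eq_single z]
        · rw [if_pos]
          refine ⟨by simp, fun w _ hw => ?_⟩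
          exact Sym2.congr_left.1 (Finset.mem_singleton.1 hw)
        · intro b _ hb
          rw [if_neg]
          rintro ⟨h1, -⟩
          exact hb (Sym2.congr_left.1 (Finset.mem_singleton.1 h1))
        · exact fun h => absurd hz h
      rw [hprod]
      norm_num
    · push Not at h
      rw [Finset.sum_eq_zero fun z hz => ind_false (h z hz)]
      have : ∏ z ∈ I, (if s(z, u) ∈ R ∧ ∀ w ∈ W, s(w, u) ∈ R → w = z then (1 / 2 : ℝ) else 1) ≤ 1 :=
        Finset.prod_le_one (fun z _ => by split_ifs <;> norm_num)
          (fun z _ => by split_ifs <;> norm_num)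
      linarith
  refine h1.trans ?_
  rw [ex_sub, ex_one, ex_const_mul, ex_sum,
    Finset.sum_congr rfl (fun z hz => ex_row_single u (hI hz)), Finset.sum_const, nsmul_eq_mul]
  have := Real.add_one_le_exp (-(I.card * (p * (1 - p) ^ (W.card - 1)) / 2))
  linarith

/-- The generating function of the numbers of private neighbours at `1 / 2`. Each vertex outside `W`
contributes independently. -/
lemma ex_bd_half {p : ℝ} (hp0 : 0 ≤ p) (hp1 : p ≤ 1) {W I : Finset V} (hI : I ⊆ W)
    (hn : (Fintype.card V : ℝ) / 2 ≤ (Fintype.card V - W.card : ℝ) * (1 - p) ^ (W.card - 1)) :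
    ex p (bdE W) (fun A => ∏ z ∈ I, (1 / 2 : ℝ) ^ (priv A W z).card) ≤
    Real.exp (-(p * Fintype.card V / 4)) ^ I.card := by
  obtain ⟨g, hg⟩ : ∃ g : V → Finset (Sym2 V) → ℝ, g = fun u R => ∏ z ∈ I,
      (if s(z, u) ∈ R ∧ ∀ w ∈ W, s(w, u) ∈ R → w = z then (1 / 2 : ℝ) else 1) := ⟨_, rfl⟩
  have h1 : ex p (bdE W) (fun A => ∏ z ∈ I, (1 / 2 : ℝ) ^ (priv A W z).card) =
      ex p (bdE W) (fun A => ∏ u ∈ Wᶜ, g u (A ∩ row W u)) := by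
    refine ex_congr fun A _ => ?_
    simp only [hg]
    rw [Finset.prod_comm]
    refine Finset.prod_congr rfl fun z hz => ?_
    rw [priv, ← Finset.prod_const, Finset.prod_filter]
    refine Finset.prod_congr rfl fun u hu => ?_
    have hrow : ∀ w ∈ W, (s(w, u) ∈ A ∩ row W u ↔ s(w, u) ∈ A) := by
      intro w hw
      rw [Finset.mem_inter, and_iff_left]
      exact Finset.mem_image_of_mem _ hw
    refine if_congr ?_ rfl rfl
    rw [hrow z (hI hz)]
    refine and_congr Iff.rfl (forall₂_congr fun w hw => ?_)
    rw [hrow w hw]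
  rw [h1, bdE, ex_prod _ _ (bdE_disj W) g, hg]
  refine (Finset.prod_le_prod (fun u _ => ex_nonneg hp0 hp1 fun R _ => ?_)
    (fun u _ => ex_row_bound hp0 hp1 hI u)).trans ?_
  · exact Finset.prod_nonneg fun z _ => by split_ifs <;> norm_num
  rw [Finset.prod_const, ← Real.exp_nat_mul, ← Real.exp_nat_mul, Finset.card_compl,
    Nat.cast_sub (Finset.card_le_univ W)]
  apply Real.exp_le_exp.2
  have h2 : (I.card : ℝ) * p * (Fintype.card V / 2) ≤
      I.card * p * ((Fintype.card V - W.card : ℝ) * (1 - p) ^ (W.card - 1)) :=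
    mul_le_mul_of_nonneg_left hn (by positivity)
  nlinarith [h2]

/-- Having fewer than `k` private neighbours costs a factor `2 ^ k * exp (-(p * |V| / 4))`: by Markov's
inequality for `2 ^ (k - |priv A W z|)`, jointly for all `z ∈ Z`. -/
lemma bd_bound {p : ℝ} (hp0 : 0 ≤ p) (hp1 : p ≤ 1) {W Z : Finset V} (hZ : Z ⊆ W) (k : ℕ) {η : ℝ}
    (hη : 0 ≤ η)
    (hn : (Fintype.card V : ℝ) / 2 ≤ (Fintype.card V - W.card : ℝ) * (1 - p) ^ (W.card - 1)) :
    ex p (bdE W) (fun A => ∏ z ∈ Z, (if k ≤ (priv A W z).card then η else 1)) ≤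
    (2 ^ k * Real.exp (-(p * Fintype.card V / 4)) + η) ^ Z.card := by
  have h1 : ex p (bdE W) (fun A => ∏ z ∈ Z, (if k ≤ (priv A W z).card then η else 1)) ≤
      ex p (bdE W) (fun A => ∑ I ∈ Z.powerset, (2 ^ (k * I.card) * η ^ (Z.card - I.card)) *
        ∏ z ∈ I, (1 / 2 : ℝ) ^ (priv A W z).card) := by
    refine ex_mono hp0 hp1 fun A _ => ?_
    have h2 : ∏ z ∈ Z, (if k ≤ (priv A W z).card then η else 1) ≤
        ∏ z ∈ Z, (2 ^ k * (1 / 2 : ℝ) ^ (priv A W z).card + η) := by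
      refine Finset.prod_le_prod (fun z _ => by split_ifs <;> positivity) fun z _ => ?_
      split_ifs with h
      · have : 0 ≤ 2 ^ k * (1 / 2 : ℝ) ^ (priv A W z).card := by positivity
        linarith
      · have h3 : (1 / 2 : ℝ) ^ k ≤ (1 / 2 : ℝ) ^ (priv A W z).card :=
          pow_le_pow_of_le_one (by norm_num) (by norm_num) (by omega)
        have h4 : (2 : ℝ) ^ k * (1 / 2) ^ k = 1 := by rw [← mul_pow]; norm_num
        have h5 : (2 : ℝ) ^ k * (1 / 2) ^ k ≤ 2 ^ k * (1 / 2 : ℝ) ^ (priv A W z).card := by gcongr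
        linarith
    refine h2.trans (le_of_eq ?_)
    rw [Finset.prod_add]
    refine Finset.sum_congr rfl fun I hI => ?_
    rw [Finset.prod_mul_distrib, Finset.prod_const, Finset.prod_const,
      Finset.card_sdiff_of_subset (Finset.mem_powerset.1 hI), pow_mul]
    ring
  refine h1.trans ?_
  rw [ex_sum, ← Finset.sum_pow_mul_eq_add_pow]
  refine Finset.sum_le_sum fun I hI => ?_
  rw [ex_const_mul, mul_pow, pow_mul]
  have := ex_bd_half hp0 hp1 ((Finset.mem_powerset.1 hI).trans hZ) hn
  calc _ ≤ ((2 : ℝ) ^ k) ^ I.card * η ^ (Z.card - I.card) *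
        Real.exp (-(p * Fintype.card V / 4)) ^ I.card := by gcongr
    _ = _ := by ring

/-- The probability that all edges of `B` and at least `k'` further edges are present inside `W`. -/
lemma in_bound {p : ℝ} (hp0 : 0 ≤ p) (hp1 : p ≤ 1) {W : Finset V} {B : Finset (Sym2 V)}
    (hB : B ⊆ inE W) (k' : ℕ) :
    ex p (inE W) (fun F => ind (B ⊆ F ∧ ∃ X ⊆ F, X.card = k' ∧ Disjoint X B)) ≤
    ((W.card : ℝ) ^ 2) ^ k' * p ^ (B.card + k') := by
  set S := ((inE W).powersetCard k').filter (fun X => Disjoint X B) with hS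
  have h1 : ex p (inE W) (fun F => ind (B ⊆ F ∧ ∃ X ⊆ F, X.card = k' ∧ Disjoint X B)) ≤
      ex p (inE W) (fun F => ∑ X ∈ S, ind (B ∪ X ⊆ F)) := by
    refine ex_mono hp0 hp1 fun F hF => ?_
    by_cases h : B ⊆ F ∧ ∃ X ⊆ F, X.card = k' ∧ Disjoint X B
    · rw [ind_true h]
      obtain ⟨hBF, X, hX, hXc, hXd⟩ := h
      rw [← ind_true (Finset.union_subset hBF hX)]
      refine Finset.single_le_sum (f := fun X => ind (B ∪ X ⊆ F)) (fun X _ => ind_nonneg _) ?_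
      exact Finset.mem_filter.2 ⟨Finset.mem_powersetCard.2 ⟨hX.trans hF, hXc⟩, hXd⟩
    · rw [ind_false h]
      exact Finset.sum_nonneg fun X _ => ind_nonneg _
  refine h1.trans ?_
  rw [ex_sum]
  have h2 : ∀ X ∈ S, ex p (inE W) (fun F => ind (B ∪ X ⊆ F)) = p ^ (B.card + k') := by
    intro X hX
    obtain ⟨hX1, hX2⟩ := Finset.mem_filter.1 hX
    obtain ⟨hX3, hX4⟩ := Finset.mem_powersetCard.1 hX1
    rw [ex_subset (Finset.union_subset hB hX3), Finset.card_union_of_disjoint hX2.symm, hX4]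
  rw [Finset.sum_congr rfl h2, Finset.sum_const, nsmul_eq_mul]
  have h3 : S.card ≤ (W.card ^ 2) ^ k' := by
    refine (Finset.card_filter_le _ _).trans ?_
    rw [Finset.card_powersetCard]
    refine (Nat.choose_le_pow _ _).trans (Nat.pow_le_pow_left ?_ _)
    have : inE W ⊆ (W ×ˢ W).image (fun x => s(x.1, x.2)) := by
      intro e
      induction e using Sym2.ind with
      | _ u v =>
        intro h
        obtain ⟨-, h1, h2⟩ := mem_inE.1 h
        exact Finset.mem_image.2 ⟨(u, v), Finset.mem_product.2 ⟨h1, h2⟩, rfl⟩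
    refine (Finset.card_le_card this).trans (Finset.card_image_le.trans ?_)
    rw [Finset.card_product, sq]
  have h4 : (S.card : ℝ) ≤ ((W.card : ℝ) ^ 2) ^ k' := by exact_mod_cast h3
  gcongr

lemma allE_eq (W : Finset V) : allE V = inE W ∪ (bdE W ∪ outE W) := by
  ext e
  induction e using Sym2.ind with
  | _ u v =>
    simp only [Finset.mem_union, mem_inE, mem_bdE, mem_outE]
    simp only [allE, Finset.mem_filter, Finset.mem_univ, true_and, Sym2.mk_isDiag_iff]
    by_cases h : u = v
    · subst h; tauto
    · tauto

lemma in_disj (W : Finset V) : Disjoint (inE W) (bdE W ∪ outE W) := by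
  rw [Finset.disjoint_left]
  intro e
  induction e using Sym2.ind with
  | _ u v =>
    simp only [Finset.mem_union, mem_inE, mem_bdE, mem_outE]
    tauto

lemma bd_disj (W : Finset V) : Disjoint (bdE W) (outE W) := by
  rw [Finset.disjoint_left]
  intro e
  induction e using Sym2.ind with
  | _ u v =>
    simp only [mem_bdE, mem_outE]
    tauto

/-- The probability bound for a fixed location of a forbidden configuration. -/
lemma fixed_bound {p : ℝ} (hp0 : 0 ≤ p) (hp1 : p ≤ 1) {N M : ℕ} {β : ℝ}
    (hβ : ∀ (U : Finset (Sym2 V)) (f : ℕ) (b : ℕ → Prop), N ≤ U.card →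
      ex p U (fun F => ind (∀ j < M, (f + F.card).testBit j = true ↔ b j)) ≤ β)
    (W Z : Finset V) (hZ : Z ⊆ W) (ρ : V → V) (hρ : ∀ z ∈ Z, ρ z ∈ W ∧ ρ z ∉ Z) (m k : ℕ)
    (hβ0 : 0 ≤ β) (hm : N + W.card * (m + 1) ≤ Fintype.card V)
    (hn : (Fintype.card V : ℝ) / 2 ≤ (Fintype.card V - W.card : ℝ) * (1 - p) ^ (W.card - 1))
    {B : Finset (Sym2 V)} (hB : B ⊆ inE W) (k' : ℕ) :
    ex p (allE V) (fun F => ind (((∀ w ∈ W, dg F w ≤ m) ∧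
      ∀ z ∈ Z, ∀ j < M, cnt F j z = cnt F j (ρ z)) ∧
      (B ⊆ F ∧ ∃ X ⊆ F, X.card = k' ∧ Disjoint X B ∧ X ⊆ inE W))) ≤
    ((W.card : ℝ) ^ 2) ^ k' * p ^ (B.card + k') *
      (2 ^ k * Real.exp (-(p * Fintype.card V / 4)) + β ^ k * (k.choose (k / 2) : ℝ) ^ M)
        ^ Z.card := by
  have hη0 : 0 ≤ β ^ k * (k.choose (k / 2) : ℝ) ^ M := by positivity
  rw [allE_eq W, ex_union (in_disj W)]
  refine le_trans ?_ (mul_le_mul_of_nonneg_right (in_bound hp0 hp1 hB k') (by positivity))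
  rw [← ex_mul_const]
  refine ex_mono hp0 hp1 fun A₀ hA₀ => ?_
  rw [ex_union (bd_disj W)]
  by_cases hin : B ⊆ A₀ ∧ ∃ X ⊆ A₀, X.card = k' ∧ Disjoint X B
  · rw [ind_true hin, one_mul]
    refine le_trans (ex_mono hp0 hp1 fun A₁ hA₁ => ?_) (bd_bound hp0 hp1 hZ k hη0 hn)
    have hpriv : ∀ z ∈ Z, priv A₁ W z = priv (A₀ ∪ A₁) W z := by
      intro z hz
      refine Finset.filter_congr fun u hu => ?_
      have : ∀ w, (s(w, u) ∈ A₁ ↔ s(w, u) ∈ A₀ ∪ A₁) := by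
        intro w
        rw [Finset.mem_union]
        refine ⟨Or.inr, fun h => h.resolve_left fun h' => ?_⟩
        exact (Finset.mem_compl.1 hu) (mem_inE.1 (hA₀ h')).2.2
      simp only [this]
    rw [Finset.prod_congr rfl fun z hz => by rw [hpriv z hz]]
    refine le_trans (ex_mono hp0 hp1 fun A₂ hA₂ => ?_)
      (cond_bound hp0 hp1 hβ (A₀ ∪ A₁) W Z ?_ hZ ρ hρ m k hβ0 hm)
    · rw [Finset.union_assoc]
      exact ind_mono fun h => h.1
    · intro e he
      induction e using Sym2.ind with
      | _ u v =>
        rcases Finset.mem_union.1 he with h | h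
        · exact ⟨u, (mem_inE.1 (hA₀ h)).2.1, by simp⟩
        · rcases mem_bdE.1 (hA₁ h) with h | h
          · exact ⟨u, h.1, by simp⟩
          · exact ⟨v, h.1, by simp⟩
  · rw [ind_false hin, zero_mul]
    apply le_of_eq
    rw [← ex_const (p := p) (bdE W) 0]
    refine ex_congr fun A₁ hA₁ => ?_
    rw [← ex_const (p := p) (outE W) 0]
    refine ex_congr fun A₂ hA₂ => ind_false ?_
    rintro ⟨-, hBF, X, hX, hXc, hXd, hXin⟩
    have hsub : ∀ Y ⊆ inE W, Y ⊆ A₀ ∪ (A₁ ∪ A₂) → Y ⊆ A₀ := by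
      intro Y hY hY' e he
      rcases Finset.mem_union.1 (hY' he) with h | h
      · exact h
      · exact absurd (Finset.union_subset_union hA₁ hA₂ h)
          (Finset.disjoint_left.1 (in_disj W) (hY he))
    exact hin ⟨hsub B hB hBF, X, hsub X hXin hX, hXc, hXd⟩

/-- The map `w` embeds a forbidden configuration in the graph with edge set `F`: the edges of the
pattern `B` are present, there are `k'` further edges on the image of `w`, the degrees are at most
`m`, and each `z ∈ Z` has the same statistics as `ρ z`. -/
def Wit {ι : Type} [DecidableEq ι] (F : Finset (Sym2 V)) (M m k' : ℕ) (B : Finset (Sym2 ι))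
    (Z : Finset ι) (ρ : ι → ι) (w : ι → V) : Prop :=
  w.Injective ∧ (∀ i, dg F (w i) ≤ m) ∧ (∀ e ∈ B, e.map w ∈ F) ∧
    (∃ X ⊆ F, X.card = k' ∧ Disjoint X (B.image (Sym2.map w)) ∧ ∀ e ∈ X, ∀ v ∈ e, ∃ i, w i = v) ∧
    ∀ z ∈ Z, ∀ j < M, cnt F j (w z) = cnt F j (w (ρ z))

/-- The union bound over all locations of a forbidden configuration. -/
lemma shape_bound {p : ℝ} (hp0 : 0 ≤ p) (hp1 : p ≤ 1) {N M : ℕ} {β : ℝ}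
    (hβ : ∀ (U : Finset (Sym2 V)) (f : ℕ) (b : ℕ → Prop), N ≤ U.card →
      ex p U (fun F => ind (∀ j < M, (f + F.card).testBit j = true ↔ b j)) ≤ β)
    {m k : ℕ} (hβ0 : 0 ≤ β) {ι : Type} [Fintype ι] [DecidableEq ι]
    (hm : N + Fintype.card ι * (m + 1) ≤ Fintype.card V)
    (hn : (Fintype.card V : ℝ) / 2 ≤
      (Fintype.card V - Fintype.card ι : ℝ) * (1 - p) ^ (Fintype.card ι - 1))
    (B : Finset (Sym2 ι)) (hB : ∀ e ∈ B, ¬ e.IsDiag) (Z : Finset ι) (ρ : ι → ι)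
    (hρ : ∀ z ∈ Z, ρ z ∉ Z) (k' : ℕ) :
    ex p (allE V) (fun F => ind (∃ w : ι → V, Wit F M m k' B Z ρ w)) ≤
    (Fintype.card V : ℝ) ^ Fintype.card ι * (((Fintype.card ι : ℝ) ^ 2) ^ k' *
      p ^ (B.card + k') *
      (2 ^ k * Real.exp (-(p * Fintype.card V / 4)) + β ^ k * (k.choose (k / 2) : ℝ) ^ M)
        ^ Z.card) := by
  have h1 : ex p (allE V) (fun F => ind (∃ w : ι → V, Wit F M m k' B Z ρ w)) ≤
      ex p (allE V) (fun F => ∑ w : ι → V, ind (Wit F M m k' B Z ρ w)) := by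
    refine ex_mono hp0 hp1 fun F _ => ?_
    by_cases h : ∃ w : ι → V, Wit F M m k' B Z ρ w
    · rw [ind_true h]
      obtain ⟨w, hw⟩ := h
      rw [← ind_true hw]
      exact Finset.single_le_sum (f := fun w => ind (Wit F M m k' B Z ρ w))
        (fun w _ => ind_nonneg _) (Finset.mem_univ w)
    · rw [ind_false h]
      exact Finset.sum_nonneg fun w _ => ind_nonneg _
  refine h1.trans ?_
  rw [ex_sum]
  rw [← Nat.cast_pow, ← Fintype.card_fun, ← nsmul_eq_mul, ← Finset.card_univ (α := ι → V),
    ← Finset.sum_const]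
  refine Finset.sum_le_sum fun w _ => ?_
  by_cases hw : w.Injective
  swap
  · have : ex p (allE V) (fun F => ind (Wit F M m k' B Z ρ w)) = 0 := by
      rw [← ex_const (p := p) (allE V) 0]
      exact ex_congr fun F _ => ind_false fun h => hw h.1
    rw [this]
    positivity
  set W := Finset.univ.image w with hW
  have hWc : W.card = Fintype.card ι := by
    rw [hW, Finset.card_image_of_injective _ hw, Finset.card_univ]
  have hZc : (Z.image w).card = Z.card := Finset.card_image_of_injective _ hw
  have hBc : (B.image (Sym2.map w)).card = B.card :=
    Finset.card_image_of_injective _ (Sym2.map.injective hw)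
  have hmemW : ∀ i, w i ∈ W := fun i => Finset.mem_image_of_mem _ (Finset.mem_univ i)
  have hBW : B.image (Sym2.map w) ⊆ inE W := by
    intro e he
    obtain ⟨e, heB, rfl⟩ := Finset.mem_image.1 he
    induction e using Sym2.ind with
    | _ a b =>
      rw [Sym2.map_mk, mem_inE]
      exact ⟨fun h => hB _ heB (Sym2.mk_isDiag_iff.2 (hw h)), hmemW a, hmemW b⟩
  have hρ' : ∀ z ∈ Z.image w, Function.extend w (w ∘ ρ) id z ∈ W ∧
      Function.extend w (w ∘ ρ) id z ∉ Z.image w := by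
    intro z hz
    obtain ⟨i, hi, rfl⟩ := Finset.mem_image.1 hz
    rw [hw.extend_apply]
    refine ⟨hmemW _, fun h => ?_⟩
    obtain ⟨j, hj, hj'⟩ := Finset.mem_image.1 h
    exact hρ i hi (hw hj' ▸ hj)
  have := fixed_bound hp0 hp1 hβ W (Z.image w)
    (Finset.image_subset_image (Finset.subset_univ Z)) (Function.extend w (w ∘ ρ) id) hρ' m k
    hβ0 (by rwa [hWc]) (by rwa [hWc]) hBW k'
  rw [hWc, hZc, hBc] at this
  refine le_trans (ex_mono hp0 hp1 fun F hF => ind_mono ?_) this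
  rintro ⟨-, h2, h3, ⟨X, hX1, hX2, hX3, hX4⟩, h5⟩
  refine ⟨⟨?_, ?_⟩, ?_, X, hX1, hX2, hX3, ?_⟩
  · intro v hv
    obtain ⟨i, -, rfl⟩ := Finset.mem_image.1 hv
    exact h2 i
  · intro v hv j hj
    obtain ⟨i, hi, rfl⟩ := Finset.mem_image.1 hv
    rw [hw.extend_apply]
    exact h5 i hi j hj
  · intro e he
    obtain ⟨e, heB, rfl⟩ := Finset.mem_image.1 he
    exact h3 e heB
  · intro e he
    refine Finset.mem_filter.2 ⟨hF (hX1 he), fun v hv => ?_⟩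
    obtain ⟨i, rfl⟩ := hX4 e he v hv
    exact hmemW i

/-! ### Automorphisms moving a vertex of the 2-core -/

/-- The edges of the path `0, 1, …, s - 1`. -/
def pathE (s : ℕ) : Finset (Sym2 (Fin s)) :=
  Finset.univ.image (fun i : Fin (s - 1) =>
    s((⟨i.1, by have := i.2; omega⟩ : Fin s), ⟨i.1 + 1, by have := i.2; omega⟩))

lemma mem_pathE {s : ℕ} {e : Sym2 (Fin s)} : e ∈ pathE s ↔
    ∃ i : ℕ, ∃ h : i + 1 < s, e = s((⟨i, by omega⟩ : Fin s), ⟨i + 1, h⟩) := by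
  simp only [pathE, Finset.mem_image, Finset.mem_univ, true_and]
  constructor
  · rintro ⟨i, rfl⟩
    exact ⟨i.1, by have := i.2; omega, rfl⟩
  · rintro ⟨i, h, rfl⟩
    exact ⟨⟨i, by omega⟩, rfl⟩

lemma pathE_card (s : ℕ) : (pathE s).card = s - 1 := by
  rw [pathE, Finset.card_image_of_injective, Finset.card_univ, Fintype.card_fin]
  intro i j h
  rcases Sym2.eq_iff.1 h with ⟨h1, h2⟩ | ⟨h1, h2⟩
  · exact Fin.ext (Fin.mk.inj_iff.1 h1)
  · have h3 := Fin.mk.inj_iff.1 h1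
    have h4 := Fin.mk.inj_iff.1 h2
    omega

lemma pathE_not_diag {s : ℕ} {e : Sym2 (Fin s)} (he : e ∈ pathE s) : ¬ e.IsDiag := by
  obtain ⟨i, h, rfl⟩ := mem_pathE.1 he
  rw [Sym2.mk_isDiag_iff]
  intro h
  have := Fin.mk.inj_iff.1 h
  omega

/-- The pattern consisting of two disjoint paths with `a` vertices each and `t` isolated vertices. -/
def pairE (a t : ℕ) : Finset (Sym2 (Fin a ⊕ Fin a ⊕ Fin t)) :=
  (pathE a).image (Sym2.map Sum.inl) ∪ (pathE a).image (Sym2.map (Sum.inr ∘ Sum.inl))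

lemma pairE_card (a t : ℕ) : (pairE a t).card = 2 * (a - 1) := by
  have hinj : Function.Injective (Sum.inr ∘ Sum.inl : Fin a → Fin a ⊕ Fin a ⊕ Fin t) :=
    Sum.inr_injective.comp Sum.inl_injective
  rw [pairE, Finset.card_union_of_disjoint,
    Finset.card_image_of_injective _ (Sym2.map.injective Sum.inl_injective),
    Finset.card_image_of_injective _ (Sym2.map.injective hinj), pathE_card]
  · ring
  · rw [Finset.disjoint_left]
    intro e he he'
    obtain ⟨e, heP, rfl⟩ := Finset.mem_image.1 he
    obtain ⟨e', heP', h⟩ := Finset.mem_image.1 he'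
    obtain ⟨i, hi, rfl⟩ := mem_pathE.1 heP
    obtain ⟨j, hj, rfl⟩ := mem_pathE.1 heP'
    simp [Sym2.map_mk] at h

lemma pairE_not_diag {a t : ℕ} {e : Sym2 (Fin a ⊕ Fin a ⊕ Fin t)} (he : e ∈ pairE a t) :
    ¬ e.IsDiag := by
  rcases Finset.mem_union.1 he with h | h
  · obtain ⟨e, heP, rfl⟩ := Finset.mem_image.1 h
    obtain ⟨i, hi, rfl⟩ := mem_pathE.1 heP
    simp
  · obtain ⟨e, heP, rfl⟩ := Finset.mem_image.1 h
    obtain ⟨i, hi, rfl⟩ := mem_pathE.1 heP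
    simp

/-- The map matching the first path of `pairE a t` with the second one. -/
def pairρ (a t : ℕ) : Fin a ⊕ Fin a ⊕ Fin t → Fin a ⊕ Fin a ⊕ Fin t :=
  Sum.elim (fun i => Sum.inr (Sum.inl i)) Sum.inr

/-- There are two disjoint paths with `a` vertices each whose corresponding vertices have equal
statistics, and `k'` further edges on these paths and `t` additional vertices. -/
def HasPair (F : Finset (Sym2 V)) (M m a t k' : ℕ) : Prop :=
  ∃ w, Wit F M m k' (pairE a t) (Finset.univ.image Sum.inl) (pairρ a t) w

/-- Reduction modulo `L`. -/
def modρ (L s : ℕ) : Fin s → Fin s := fun i => ⟨i.1 % L, (Nat.mod_le _ _).trans_lt i.2⟩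

/-- There is a path with `s` vertices along which the statistics are periodic with period `L`, and
`k'` further edges on its vertices. -/
def HasPer (F : Finset (Sym2 V)) (M m L s k' : ℕ) : Prop :=
  ∃ w, Wit F M m k' (pathE s) (Finset.univ.filter (fun i => L ≤ i.1)) (modρ L s) w

section Aut
variable {F : Finset (Sym2 V)} {f : Equiv.Perm V}

lemma dg_aut (hf : ∀ u v, s(f u, f v) ∈ F ↔ s(u, v) ∈ F) (v : V) : dg F (f v) = dg F v := by
  unfold dg
  symm
  refine Finset.card_bij (fun u _ => f u) ?_ (fun _ _ _ _ h => f.injective h) ?_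
  · intro u hu
    rw [mem_nb] at hu ⊢
    exact (hf _ _).2 hu
  · intro u hu
    refine ⟨f.symm u, ?_, by simp⟩
    rw [mem_nb] at hu ⊢
    rw [← hf]; simpa using hu

lemma cnt_aut (hf : ∀ u v, s(f u, f v) ∈ F ↔ s(u, v) ∈ F) (j : ℕ) (v : V) :
    cnt F j (f v) = cnt F j v := by
  unfold cnt
  symm
  refine Finset.card_bij (fun u _ => f u) ?_ (fun _ _ _ _ h => f.injective h) ?_
  · intro u hu
    rw [Finset.mem_filter, mem_nb] at hu ⊢
    rw [dg_aut hf]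
    exact ⟨(hf _ _).2 hu.1, hu.2⟩
  · intro u hu
    refine ⟨f.symm u, ?_, by simp⟩
    rw [Finset.mem_filter, mem_nb] at hu ⊢
    rw [← hf, ← dg_aut hf]; simpa using hu

/-- A path `x 0, …, x (a - 1)` inside `S` that is disjoint from its image under `f`. -/
def Fresh (F : Finset (Sym2 V)) (f : Equiv.Perm V) (S : Set V) (a : ℕ) (x : ℕ → V) : Prop :=
  (∀ i < a, x i ∈ S) ∧ (∀ i, i + 1 < a → s(x i, x (i + 1)) ∈ F) ∧
    (∀ i < a, ∀ j < a, x i = x j → i = j) ∧ ∀ i < a, ∀ j < a, x i ≠ f (x j)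

lemma Fresh.rev {S : Set V} {a : ℕ} {x : ℕ → V} (h : Fresh F f S a x) :
    Fresh F f S a (fun i => x (a - 1 - i)) := by
  refine ⟨fun i hi => h.1 _ (by omega), fun i hi => ?_, fun i hi j hj hij => ?_,
    fun i hi j hj => h.2.2.2 _ (by omega) _ (by omega)⟩
  · have := h.2.1 (a - 1 - (i + 1)) (by omega)
    rw [show a - 1 - (i + 1) + 1 = a - 1 - i by omega] at this
    rwa [Sym2.eq_swap]
  · have := h.2.2.1 _ (by omega) _ (by omega) hij
    omega

/-- The extra edges `E` together with the extra vertices `T` can be added to a fresh path and its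
image. -/
def Extra (F : Finset (Sym2 V)) (f : Equiv.Perm V) (a : ℕ) (x : ℕ → V) (E : Finset (Sym2 V))
    (T : Finset V) : Prop :=
  E ⊆ F ∧ (∀ v ∈ T, ∀ i < a, v ≠ x i ∧ v ≠ f (x i)) ∧
    ∀ e ∈ E, (∀ i, i + 1 < a → e ≠ s(x i, x (i + 1)) ∧ e ≠ s(f (x i), f (x (i + 1)))) ∧
      ∀ v ∈ e, (∃ i < a, v = x i ∨ v = f (x i)) ∨ v ∈ T

lemma Extra.rev {a : ℕ} {x : ℕ → V} {E : Finset (Sym2 V)} {T : Finset V}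
    (h : Extra F f a (fun i => x (a - 1 - i)) E T) : Extra F f a x E T := by
  obtain ⟨h1, h2, h3⟩ := h
  refine ⟨h1, fun v hv i hi => ?_, fun e he => ⟨fun i hi => ?_, fun v hv => ?_⟩⟩
  · have := h2 v hv (a - 1 - i) (by omega)
    simpa only [show a - 1 - (a - 1 - i) = i by omega] using this
  · have := (h3 e he).1 (a - 1 - (i + 1)) (by omega)
    simp only [show a - 1 - (a - 1 - (i + 1)) = i + 1 by omega,
      show a - 1 - (a - 1 - (i + 1) + 1) = i by omega] at this
    rwa [Sym2.eq_swap, Sym2.eq_swap (a := f (x i))]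
  · rcases (h3 e he).2 v hv with ⟨i, hi, h⟩ | h
    · exact Or.inl ⟨a - 1 - i, by omega, h⟩
    · exact Or.inr h

lemma Extra.union {a : ℕ} {x : ℕ → V} {E E' : Finset (Sym2 V)} {T T' : Finset V}
    (h : Extra F f a x E T) (h' : Extra F f a x E' T') : Extra F f a x (E ∪ E') (T ∪ T') := by
  refine ⟨Finset.union_subset h.1 h'.1, fun v hv => ?_, fun e he => ?_⟩
  · rcases Finset.mem_union.1 hv with hv | hv
    · exact h.2.1 v hv
    · exact h'.2.1 v hv
  · rcases Finset.mem_union.1 he with he | he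
    · refine ⟨(h.2.2 e he).1, fun v hv => ?_⟩
      rcases (h.2.2 e he).2 v hv with h4 | h4
      · exact Or.inl h4
      · exact Or.inr (Finset.mem_union_left _ h4)
    · refine ⟨(h'.2.2 e he).1, fun v hv => ?_⟩
      rcases (h'.2.2 e he).2 v hv with h4 | h4
      · exact Or.inl h4
      · exact Or.inr (Finset.mem_union_right _ h4)

lemma hasPair_of (hf : ∀ u v, s(f u, f v) ∈ F ↔ s(u, v) ∈ F) {m : ℕ} (hm : ∀ v, dg F v ≤ m)
    (M : ℕ) {S : Set V} {a : ℕ} {x : ℕ → V} (hx : Fresh F f S a x) {E : Finset (Sym2 V)}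
    {T : Finset V} (hE : Extra F f a x E T) {t k' : ℕ} (ht : T.card = t) (hk : k' ≤ E.card) :
    HasPair F M m a t k' := by
  obtain ⟨-, hx1, hx2, hx3⟩ := hx
  obtain ⟨hE1, hE2, hE3⟩ := hE
  let τ : T ≃ Fin t := T.equivFinOfCardEq ht
  have hτT : ∀ k, ((τ.symm k : T) : V) ∈ T := fun k => (τ.symm k).2
  refine ⟨Sum.elim (fun i => x i) (Sum.elim (fun i => f (x i)) (fun k => (τ.symm k : V))),
    ?_, fun i => hm _, ?_, ?_, ?_⟩
  · rintro (i | i | i) (j | j | j) h <;> simp only [Sum.elim_inl, Sum.elim_inr] at h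
    · rw [Fin.ext (hx2 i i.2 j j.2 h)]
    · exact absurd h (hx3 i i.2 j j.2)
    · exact absurd h.symm (hE2 _ (hτT j) i i.2).1
    · exact absurd h.symm (hx3 j j.2 i i.2)
    · rw [Fin.ext (hx2 i i.2 j j.2 (f.injective h))]
    · exact absurd h.symm (hE2 _ (hτT j) i i.2).2
    · exact absurd h (hE2 _ (hτT i) j j.2).1
    · exact absurd h (hE2 _ (hτT i) j j.2).2
    · rw [τ.symm.injective (Subtype.ext h)]
  · intro e he
    rcases Finset.mem_union.1 he with h | h
    · obtain ⟨e, heP, rfl⟩ := Finset.mem_image.1 h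
      obtain ⟨i, hi, rfl⟩ := mem_pathE.1 heP
      exact hx1 i hi
    · obtain ⟨e, heP, rfl⟩ := Finset.mem_image.1 h
      obtain ⟨i, hi, rfl⟩ := mem_pathE.1 heP
      exact (hf _ _).2 (hx1 i hi)
  · obtain ⟨X, hXE, hXc⟩ := Finset.exists_subset_card_eq hk
    refine ⟨X, hXE.trans hE1, hXc, ?_, ?_⟩
    · rw [Finset.disjoint_left]
      intro e he he'
      obtain ⟨e', heP, rfl⟩ := Finset.mem_image.1 he'
      rcases Finset.mem_union.1 heP with h | h
      · obtain ⟨e, h', rfl⟩ := Finset.mem_image.1 h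
        obtain ⟨i, hi, rfl⟩ := mem_pathE.1 h'
        exact ((hE3 _ (hXE he)).1 i hi).1 rfl
      · obtain ⟨e, h', rfl⟩ := Finset.mem_image.1 h
        obtain ⟨i, hi, rfl⟩ := mem_pathE.1 h'
        exact ((hE3 _ (hXE he)).1 i hi).2 rfl
    · intro e he v hv
      rcases (hE3 e (hXE he)).2 v hv with ⟨i, hi, rfl | rfl⟩ | h
      · exact ⟨Sum.inl ⟨i, hi⟩, rfl⟩
      · exact ⟨Sum.inr (Sum.inl ⟨i, hi⟩), rfl⟩
      · exact ⟨Sum.inr (Sum.inr (τ ⟨v, h⟩)), by simp⟩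
  · intro z hz j hj
    obtain ⟨i, -, rfl⟩ := Finset.mem_image.1 hz
    simp only [pairρ, Sum.elim_inl, Sum.elim_inr]
    exact (cnt_aut hf j _).symm

lemma hasPer_of {m : ℕ} (hm : ∀ v, dg F v ≤ m) {M L s k' : ℕ} {w : ℕ → V}
    (hw1 : ∀ i < s, ∀ j < s, w i = w j → i = j) (hw2 : ∀ i, i + 1 < s → s(w i, w (i + 1)) ∈ F)
    (hper : ∀ i j, cnt F j (w (i + L)) = cnt F j (w i)) {X : Finset (Sym2 V)} (hXF : X ⊆ F)
    (hXk : X.card = k') (hX : ∀ e ∈ X, (∀ i, i + 1 < s → e ≠ s(w i, w (i + 1))) ∧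
      ∀ v ∈ e, ∃ i < s, v = w i) : HasPer F M m L s k' := by
  have hper' : ∀ j q i, cnt F j (w (i + L * q)) = cnt F j (w i) := by
    intro j q
    induction q with
    | zero => intro i; rfl
    | succ q ih => intro i; rw [mul_add, mul_one, ← add_assoc, hper, ih]
  refine ⟨fun i => w i, fun i j h => Fin.ext (hw1 i i.2 j j.2 h), fun i => hm _, ?_,
    ⟨X, hXF, hXk, ?_, ?_⟩, ?_⟩
  · intro e he
    obtain ⟨i, hi, rfl⟩ := mem_pathE.1 he
    exact hw2 i hi
  · rw [Finset.disjoint_left]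
    intro e he he'
    obtain ⟨e', heP, rfl⟩ := Finset.mem_image.1 he'
    obtain ⟨i, hi, rfl⟩ := mem_pathE.1 heP
    exact (hX _ he).1 i hi rfl
  · intro e he v hv
    obtain ⟨i, hi, rfl⟩ := (hX e he).2 v hv
    exact ⟨⟨i, hi⟩, rfl⟩
  · intro z _ j _
    have := hper' j (z.1 / L) (z.1 % L)
    rw [Nat.mod_add_div] at this
    exact this

/-- A neighbour `u` in `S` of the endpoint of a maximal fresh path cannot extend it, so `u` is on the
path or its image, is mapped onto the path, or is fixed. -/
lemma end_cases {S : Set V} {a : ℕ} (ha : 1 ≤ a) {x : ℕ → V} (hx : Fresh F f S a x)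
    (hmax : ¬ ∃ y, Fresh F f S (a + 1) y) {u : V} (huS : u ∈ S) (hu : s(x (a - 1), u) ∈ F) :
    (∃ j < a, u = x j) ∨ (∃ j < a, u = f (x j)) ∨ (∃ j < a, f u = x j) ∨
      (f u = u ∧ ∀ j < a, u ≠ x j ∧ u ≠ f (x j)) := by
  by_contra hcon
  push Not at hcon
  obtain ⟨h1, h2, h3, h4⟩ := hcon
  have hfu : f u ≠ u := fun h => by
    obtain ⟨j, hj, h5⟩ := h4 h
    by_cases h6 : u = x j
    · exact h1 j hj h6
    · exact h2 j hj (h5 h6)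
  obtain ⟨hx0, hx1, hx2, hx3⟩ := hx
  refine hmax ⟨fun i => if i < a then x i else u, ?_, ?_, ?_, ?_⟩
  · intro i _
    dsimp only
    split_ifs with h
    · exact hx0 i h
    · exact huS
  · intro i hi
    dsimp only
    rw [if_pos (by omega : i < a)]
    split_ifs with h
    · exact hx1 i h
    · rwa [show i = a - 1 by omega]
  · intro i hi j hj h
    dsimp only at h
    split_ifs at h with h5 h6 h6
    · exact hx2 i h5 j h6 h
    · exact absurd h.symm (h1 i h5)
    · exact absurd h (h1 j h6)
    · omega
  · intro i hi j hj h
    dsimp only at h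
    split_ifs at h with h5 h6 h6
    · exact hx3 i h5 j h6 h
    · exact h3 i h5 h.symm
    · exact h2 j h6 h
    · exact hfu h.symm

/-- A chord of a fresh path yields two extra edges: the chord and its image. -/
lemma extra_chord (hF : F ⊆ allE V) (hf : ∀ u v, s(f u, f v) ∈ F ↔ s(u, v) ∈ F) {S : Set V} {a : ℕ}
    (ha : 1 ≤ a) {x : ℕ → V} (hx : Fresh F f S a x) {j : ℕ} (hj : j < a)
    (hu : s(x (a - 1), x j) ∈ F) (hu2 : 2 ≤ a → x j ≠ x (a - 2)) :
    ∃ E, Extra F f a x E ∅ ∧ 2 ≤ E.card := by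
  obtain ⟨-, hx1, hx2, hx3⟩ := hx
  have hjne : x (a - 1) ≠ x j := by
    have := hF hu
    simpa [allE] using this
  have hnp : ∀ i, i + 1 < a → s(x (a - 1), x j) ≠ s(x i, x (i + 1)) := by
    intro i hi h
    rcases Sym2.eq_iff.1 h with ⟨h1, h2⟩ | ⟨h1, h2⟩
    · have := hx2 _ (by omega) _ (by omega) h1
      omega
    · have := hx2 _ (by omega) _ (by omega) h1
      apply hu2 (by omega)
      rw [h2]
      congr 1; omega
  have hnp3 : ∀ i < a, ∀ v, ∀ j < a, ∀ k < a, s(x i, v) ≠ s(f (x j), f (x k)) := by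
    intro i hi v j hj k hk h
    rcases Sym2.eq_iff.1 h with ⟨h1, -⟩ | ⟨h1, -⟩
    · exact hx3 _ hi _ hj h1
    · exact hx3 _ hi _ hk h1
  refine ⟨{s(x (a - 1), x j), s(f (x (a - 1)), f (x j))}, ⟨?_, by simp, ?_⟩, ?_⟩
  · intro e he
    rcases Finset.mem_insert.1 he with rfl | he
    · exact hu
    · rw [Finset.mem_singleton.1 he]
      exact (hf _ _).2 hu
  · intro e he
    rcases Finset.mem_insert.1 he with rfl | he
    · refine ⟨fun i hi => ⟨hnp i hi, hnp3 _ (by omega) _ _ (by omega) _ (by omega)⟩, ?_⟩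
      intro v hv
      rcases Sym2.mem_iff.1 hv with rfl | rfl
      · exact Or.inl ⟨a - 1, by omega, Or.inl rfl⟩
      · exact Or.inl ⟨j, hj, Or.inl rfl⟩
    · rw [Finset.mem_singleton] at he
      subst he
      refine ⟨fun i hi => ⟨(hnp3 _ (by omega) _ _ (by omega) _ (by omega)).symm, fun h => ?_⟩, ?_⟩
      · refine hnp i hi ?_
        apply Sym2.map.injective f.injective
        simpa using h
      · intro v hv
        rcases Sym2.mem_iff.1 hv with rfl | rfl
        · exact Or.inl ⟨a - 1, by omega, Or.inr rfl⟩
        · exact Or.inl ⟨j, hj, Or.inr rfl⟩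
  · rw [Finset.card_pair]
    exact hnp3 _ (by omega) _ _ (by omega) _ hj

/-- An edge between a fresh path and its image is an extra edge. -/
lemma extra_cross {S : Set V} {a : ℕ} {x : ℕ → V} (hx : Fresh F f S a x) {i j : ℕ} (hi : i < a)
    (hj : j < a) (hu : s(x i, f (x j)) ∈ F) : Extra F f a x {s(x i, f (x j))} ∅ := by
  obtain ⟨-, hx1, hx2, hx3⟩ := hx
  refine ⟨by simpa using hu, by simp, ?_⟩
  intro e he
  rw [Finset.mem_singleton] at he
  subst he
  refine ⟨fun k hk => ⟨fun h => ?_, fun h => ?_⟩, fun v hv => ?_⟩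
  · rcases Sym2.eq_iff.1 h with ⟨-, h2⟩ | ⟨-, h2⟩
    · exact hx3 _ (by omega) _ hj h2.symm
    · exact hx3 _ (by omega) _ hj h2.symm
  · rcases Sym2.eq_iff.1 h with ⟨h2, -⟩ | ⟨h2, -⟩
    · exact hx3 _ hi _ (by omega) h2
    · exact hx3 _ hi _ (by omega) h2
  · rcases Sym2.mem_iff.1 hv with rfl | rfl
    · exact Or.inl ⟨i, hi, Or.inl rfl⟩
    · exact Or.inl ⟨j, hj, Or.inr rfl⟩

/-- A fixed neighbour of an endpoint yields one extra vertex and two extra edges. -/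
lemma extra_fixed (hf : ∀ u v, s(f u, f v) ∈ F ↔ s(u, v) ∈ F) {a : ℕ}
    (ha : 1 ≤ a) {x : ℕ → V} {u : V} (hu : s(x (a - 1), u) ∈ F)
    (hfu : f u = u) (hu2 : ∀ j < a, u ≠ x j ∧ u ≠ f (x j)) :
    Extra F f a x {s(x (a - 1), u), s(f (x (a - 1)), u)} {u} := by
  have key : ∀ e : Sym2 V, u ∈ e → ∀ i, i + 1 < a →
      e ≠ s(x i, x (i + 1)) ∧ e ≠ s(f (x i), f (x (i + 1))) := by
    intro e he i hi
    refine ⟨?_, ?_⟩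
    · rintro rfl
      rcases Sym2.mem_iff.1 he with h | h
      · exact (hu2 _ (by omega)).1 h
      · exact (hu2 _ (by omega)).1 h
    · rintro rfl
      rcases Sym2.mem_iff.1 he with h | h
      · exact (hu2 _ (by omega)).2 h
      · exact (hu2 _ (by omega)).2 h
  refine ⟨?_, ?_, ?_⟩
  · intro e he
    rcases Finset.mem_insert.1 he with rfl | he
    · exact hu
    · rw [Finset.mem_singleton.1 he]
      have := (hf _ _).2 hu
      rwa [hfu] at this
  · intro v hv
    rw [Finset.mem_singleton.1 hv]
    exact hu2
  · intro e he
    have hue : u ∈ e := by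
      rcases Finset.mem_insert.1 he with rfl | he
      · simp
      · rw [Finset.mem_singleton.1 he]; simp
    refine ⟨key e hue, fun v hv => ?_⟩
    rcases Finset.mem_insert.1 he with rfl | he
    · rcases Sym2.mem_iff.1 hv with rfl | rfl
      · exact Or.inl ⟨a - 1, by omega, Or.inl rfl⟩
      · exact Or.inr (by simp)
    · rw [Finset.mem_singleton.1 he] at hv
      rcases Sym2.mem_iff.1 hv with rfl | rfl
      · exact Or.inl ⟨a - 1, by omega, Or.inr rfl⟩
      · exact Or.inr (by simp)

/-- If the image of a fresh path `x` continues `x`, then the images of `x` under the powers of `f`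
form a walk that is periodic up to `f`. If its first `L + r` vertices are not distinct, then the
initial segment before the first repetition is a periodic pattern with one further edge. -/
lemma translation (hF : F ⊆ allE V) (hf : ∀ u v, s(f u, f v) ∈ F ↔ s(u, v) ∈ F) {m : ℕ}
    (hm : ∀ v, dg F v ≤ m) (M : ℕ) {r : ℕ} {S : Set V} {L : ℕ} (hL : 1 ≤ L)
    {x : ℕ → V} (hx : Fresh F f S L x) (hadj : s(x (L - 1), f (x 0)) ∈ F)
    (h1 : L = 1 → f (f (x 0)) ≠ x 0) :
    HasPer F M m L (L + r) 0 ∨ ∃ a, L ≤ a ∧ a < r ∧ HasPer F M m L (L + a) 1 := by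
  obtain ⟨-, hx1, hx2, hx3⟩ := hx
  set w : ℕ → V := fun i => f^[i / L] (x (i % L)) with hw
  have hwL : ∀ i, w (i + L) = f (w i) := by
    intro i
    simp only [hw]
    rw [Nat.add_div_right _ (by omega), Nat.add_mod_right,
      Function.iterate_succ_apply']
  have hw0 : ∀ i < L, w i = x i := by
    intro i hi
    simp [hw, Nat.div_eq_of_lt hi, Nat.mod_eq_of_lt hi]
  have hwadj : ∀ i, s(w i, w (i + 1)) ∈ F := by
    intro i
    induction i using Nat.strong_induction_on with
    | _ i ih =>
      rcases lt_or_ge i L with h | h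
      · rcases lt_or_ge (i + 1) L with h' | h'
        · rw [hw0 i h, hw0 _ h']
          exact hx1 i h'
        · have : i + 1 = 0 + L := by omega
          rw [this, hwL, hw0 i h, hw0 0 (by omega), show i = L - 1 by omega]
          exact hadj
      · have h2 := ih (i - L) (by omega)
        rw [← hf, ← hwL, ← hwL, show i - L + L = i by omega,
          show i - L + 1 + L = i + 1 by omega] at h2
        exact h2
  have hinj : ∀ i < 2 * L, ∀ j < 2 * L, w i = w j → i = j := by
    have hw1 : ∀ i, L ≤ i → i < 2 * L → w i = f (x (i - L)) := by
      intro i hi1 hi2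
      rw [← hw0 _ (by omega), ← hwL, show i - L + L = i by omega]
    intro i hi j hj h
    rcases lt_or_ge i L with h3 | h3 <;> rcases lt_or_ge j L with h4 | h4
    · rw [hw0 i h3, hw0 j h4] at h
      exact hx2 i h3 j h4 h
    · rw [hw0 i h3, hw1 j h4 hj] at h
      exact absurd h (hx3 i h3 _ (by omega))
    · rw [hw1 i h3 hi, hw0 j h4] at h
      exact absurd h.symm (hx3 j h4 _ (by omega))
    · rw [hw1 i h3 hi, hw1 j h4 hj] at h
      have := hx2 _ (by omega) _ (by omega) (f.injective h)
      omega
  -- The walk does not backtrack, so the edge closing the first cycle is not an edge of the path.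
  have hback : ∀ i, w i ≠ w (i + 2) := by
    intro i
    induction i using Nat.strong_induction_on with
    | _ i ih =>
      rcases lt_or_ge i L with h | h
      · rcases Nat.lt_or_ge 1 L with h' | h'
        · intro heq
          have := hinj _ (by omega) _ (by omega) heq
          omega
        · have hL1 : L = 1 := by omega
          subst hL1
          have hi0 : i = 0 := by omega
          subst hi0
          have h2 : w (0 + 2) = f (f (x 0)) := by
            rw [show 0 + 2 = 0 + 1 + 1 from rfl, hwL, hwL, hw0 0 (by omega)]
          rw [h2, hw0 0 (by omega)]
          exact (h1 rfl).symm
      · intro heq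
        apply ih (i - L) (by omega)
        apply f.injective
        rw [← hwL, ← hwL, show i - L + L = i by omega, show i - L + 2 + L = i + 2 by omega]
        exact heq
  have hper : ∀ i j, cnt F j (w (i + L)) = cnt F j (w i) := by
    intro i j
    rw [hwL, cnt_aut hf]
  by_cases hrep : ∃ j, j < L + r ∧ ∃ i < j, w i = w j
  swap
  · left
    push Not at hrep
    refine hasPer_of hm ?_ (fun i _ => hwadj i) hper (X := ∅) (by simp) (by simp) (by simp)
    intro i hi j hj h
    rcases lt_trichotomy i j with h2 | h2 | h2
    · exact absurd h (hrep j hj i h2)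
    · exact h2
    · exact absurd h.symm (hrep i hi j h2)
  · right
    have hJ := Nat.find_spec hrep
    have hJmin : ∀ j < Nat.find hrep, ∀ i < j, w i ≠ w j := by
      intro j hj i hi h
      exact Nat.find_min hrep hj ⟨hj.trans hJ.1, i, hi, h⟩
    set J := Nat.find hrep with hJdef
    obtain ⟨hJ1, i, hiJ, hiw⟩ := hJ
    have hJinj : ∀ i < J, ∀ j < J, w i = w j → i = j := by
      intro i hi j hj h
      rcases lt_trichotomy i j with h2 | h2 | h2
      · exact absurd h (hJmin j hj i h2)
      · exact h2
      · exact absurd h.symm (hJmin i hi j h2)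
    have hJ2 : 2 * L ≤ J := by
      by_contra hcon
      have := hinj i (by omega) J (by omega) hiw
      omega
    have hi1 : i ≠ J - 1 := by
      rintro rfl
      have := hF (hwadj (J - 1))
      rw [show J - 1 + 1 = J by omega, ← hiw] at this
      simp [allE] at this
    have hi2 : i ≠ J - 2 := by
      rintro rfl
      apply hback (J - 2)
      rw [hiw]; congr 1; omega
    refine ⟨J - L, by omega, by omega, ?_⟩
    rw [show L + (J - L) = J by omega]
    refine hasPer_of hm hJinj (fun i _ => hwadj i) hper (X := {s(w (J - 1), w i)}) ?_ (by simp) ?_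
    · have := hwadj (J - 1)
      rw [show J - 1 + 1 = J by omega, ← hiw] at this
      simpa using this
    · intro e he
      rw [Finset.mem_singleton] at he
      subst he
      refine ⟨fun k hk h => ?_, fun v hv => ?_⟩
      · rcases Sym2.eq_iff.1 h with ⟨h3, h4⟩ | ⟨h3, h4⟩
        · have := hJinj _ (by omega) _ (by omega) h3
          omega
        · have h5 := hJinj _ (by omega) _ (by omega) h3
          have h6 := hJinj _ (by omega) _ (by omega) h4
          omega
      · rcases Sym2.mem_iff.1 hv with rfl | rfl
        · exact ⟨J - 1, by omega, rfl⟩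
        · exact ⟨i, hiJ, rfl⟩

/-- The edge leaving the endpoint `x (a - 1)` of a maximal fresh path contributes more extra edges
than extra vertices. -/
lemma end_extra (hF : F ⊆ allE V) (hf : ∀ u v, s(f u, f v) ∈ F ↔ s(u, v) ∈ F) {S : Set V} {a : ℕ}
    (ha : 1 ≤ a) {x : ℕ → V} (hx : Fresh F f S a x) (hmax : ¬ ∃ y, Fresh F f S (a + 1) y) {u : V}
    (huS : u ∈ S) (hu : s(x (a - 1), u) ∈ F) (hu2 : 2 ≤ a → u ≠ x (a - 2)) :
    (∃ E, Extra F f a x E ∅ ∧ 2 ≤ E.card) ∨ ∃ E T, Extra F f a x E T ∧ T.card + 1 ≤ E.card ∧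
      T.card ≤ 1 ∧ ((∃ j < a, u = f (x j) ∧ E = {s(x (a - 1), f (x j))}) ∨
        (∃ j < a, f u = x j ∧ E = {s(x j, f (x (a - 1)))}) ∨
        ((∀ j < a, u ≠ x j ∧ u ≠ f (x j)) ∧ E = {s(x (a - 1), u), s(f (x (a - 1)), u)})) := by
  rcases end_cases ha hx hmax huS hu with ⟨j, hj, rfl⟩ | ⟨j, hj, rfl⟩ | ⟨j, hj, h⟩ | ⟨hfu, hu3⟩
  · exact Or.inl (extra_chord hF hf ha hx hj hu hu2)
  · refine Or.inr ⟨_, _, extra_cross hx (by omega) hj hu, by simp, by simp, ?_⟩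
    exact Or.inl ⟨j, hj, rfl, rfl⟩
  · have h2 : s(x j, f (x (a - 1))) ∈ F := by
      rw [← h, hf, Sym2.eq_swap]; exact hu
    refine Or.inr ⟨_, _, extra_cross hx hj (by omega) h2, by simp, by simp, ?_⟩
    exact Or.inr (Or.inl ⟨j, hj, h, rfl⟩)
  · refine Or.inr ⟨_, _, extra_fixed hf ha hu hfu hu3, ?_, by simp, ?_⟩
    · rw [Finset.card_pair]
      · simp
      · intro h
        exact hx.2.2.2 (a - 1) (by omega) (a - 1) (by omega) (Sym2.congr_left.1 h)
    · exact Or.inr (Or.inr ⟨hu3, rfl⟩)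

/-- A maximal fresh path together with its image, and one more edge at each of its two ends, spans
a subgraph with at least as many edges as vertices, unless the end of a path of the same length is
adjacent to the image of its start. For `a = 1` the latter alternative includes that the moved vertex
is not swapped with its image. -/
lemma max_fresh (hF : F ⊆ allE V) (hf : ∀ u v, s(f u, f v) ∈ F ↔ s(u, v) ∈ F) {m : ℕ}
    (hm : ∀ v, dg F v ≤ m) (M : ℕ) {S : Set V}
    (hS : ∀ v ∈ S, 2 ≤ ({u ∈ S | s(v, u) ∈ F} : Set V).ncard) {a : ℕ}
    (ha : 1 ≤ a) {x : ℕ → V} (hx : Fresh F f S a x) (hmax : ¬ ∃ y, Fresh F f S (a + 1) y) :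
    (∃ t ≤ 2, HasPair F M m a t (t + 2)) ∨ ∃ y, Fresh F f S a y ∧ s(y (a - 1), f (y 0)) ∈ F ∧
      (a = 1 → f (f (y 0)) ≠ y 0) := by
  have hnext : ∀ v ∈ S, ∀ b, ∃ u ∈ S, s(v, u) ∈ F ∧ u ≠ b := by
    intro v hv b
    obtain ⟨u, hu, hub⟩ := Set.exists_ne_of_one_lt_ncard (hS v hv) b
    exact ⟨u, hu.1, hu.2, hub⟩
  obtain ⟨u, huS, huF, hu2⟩ := hnext (x (a - 1)) (hx.1 _ (by omega)) (x (a - 2))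
  obtain ⟨u', huS', huF', hu2'⟩ := hnext (x 0) (hx.1 _ (by omega)) (if a = 1 then u else x 1)
  have hy := hx.rev
  set y : ℕ → V := fun i => x (a - 1 - i) with hydef
  have hyl : y (a - 1) = x 0 := by simp [hydef]
  have hy0 : y 0 = x (a - 1) := by simp [hydef]
  have hne : a = 1 → u ≠ u' := by
    intro h
    rw [if_pos h] at hu2'
    exact hu2'.symm
  have hu2'' : 2 ≤ a → u' ≠ y (a - 2) := by
    intro h
    rw [if_neg (by omega)] at hu2'
    simp only [hydef]
    rwa [show a - 1 - (a - 2) = 1 by omega]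
  rcases end_extra hF hf ha hx hmax huS huF (fun _ => hu2) with
    ⟨E, hE, hEc⟩ | ⟨E, T, hE, hEc, hTc, hEs⟩
  · exact Or.inl ⟨0, by omega, hasPair_of hf hm M hx hE rfl hEc⟩
  rcases end_extra hF hf ha hy hmax huS' (by rwa [hyl]) hu2'' with
    ⟨E', hE', hEc'⟩ | ⟨E', T', hE', hEc', hTc', hEs'⟩
  · exact Or.inl ⟨0, by omega, hasPair_of hf hm M hx hE'.rev rfl hEc'⟩
  by_cases hd : Disjoint E E'
  · left
    have h1 := Finset.card_union_le T T'
    have h2 := Finset.card_union_of_disjoint hd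
    exact ⟨(T ∪ T').card, by omega, hasPair_of hf hm M hx (hE.union hE'.rev) rfl (by omega)⟩
  right
  rw [Finset.not_disjoint_iff] at hd
  obtain ⟨e, he, he'⟩ := hd
  obtain ⟨-, -, hx2, hx3⟩ := id hx
  rw [hyl] at hEs'
  have hyx : ∀ i < a, ∃ j < a, y i = x j := fun i hi => ⟨a - 1 - i, by omega, rfl⟩
  have hl : a - 1 < a := by omega
  have hz : 0 < a := by omega
  rcases hEs with ⟨j, hj, huj, rfl⟩ | ⟨j, hj, huj, rfl⟩ | ⟨hu3, rfl⟩ <;>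
  rcases hEs' with ⟨i, hi, hui, rfl⟩ | ⟨i, hi, hui, rfl⟩ | ⟨hu3', rfl⟩
  · exfalso
    obtain ⟨i', hi', hyi⟩ := hyx i hi
    rw [Finset.mem_singleton] at he he'
    subst he
    rw [hyi] at he' hui
    rcases Sym2.eq_iff.1 he' with ⟨h1, h2⟩ | ⟨h1, h2⟩
    · have h3 := hx2 _ hl _ hz h1
      exact hne (by omega) (by rw [huj, hui, h2])
    · exact hx3 _ hl _ hi' h1
  · obtain ⟨i', hi', hyi⟩ := hyx i hi
    rw [Finset.mem_singleton] at he he'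
    subst he
    rw [hyi] at he' hui
    rcases Sym2.eq_iff.1 he' with ⟨h1, h2⟩ | ⟨h1, h2⟩
    · have h3 := hx2 _ hj _ hz (f.injective h2)
      subst h3
      refine ⟨x, hx, huj ▸ huF, fun h => ?_⟩
      rw [← huj]
      intro h4
      have h5 : u = u' := by
        apply f.injective
        rw [h4, hui, ← h1]
        congr 1; omega
      exact hne h h5
    · exact absurd h1 (hx3 _ hl _ hz)
  · exfalso
    rw [Finset.mem_singleton] at he
    subst he
    have hu4 : u' ∈ s(x (a - 1), f (x j)) := by
      rcases Finset.mem_insert.1 he' with h | h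
      · rw [h]; simp
      · rw [Finset.mem_singleton.1 h]; simp
    have hu5 := hu3' (a - 1 - (a - 1)) (by omega)
    rcases Sym2.mem_iff.1 hu4 with h | h
    · exact (hu3' 0 hz).1 (by rw [hy0, h])
    · refine (hu3' (a - 1 - j) (by omega)).2 ?_
      simp only [hydef]
      rw [show a - 1 - (a - 1 - j) = j by omega, h]
  · obtain ⟨i', hi', hyi⟩ := hyx i hi
    rw [Finset.mem_singleton] at he he'
    subst he
    rw [hyi] at he' hui
    rcases Sym2.eq_iff.1 he' with ⟨h1, h2⟩ | ⟨h1, h2⟩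
    · have h3 := hx2 _ hj _ hz h1
      have h4 := hx2 _ hl _ hi' (f.injective h2)
      subst h3
      refine ⟨y, hy, ?_, fun h => ?_⟩
      · rw [hyl, hy0, h4, ← hui]; exact huF'
      · rw [hy0, h4, ← hui]
        intro h5
        have h6 : u = u' := by
          apply f.injective
          rw [h5, huj]
          congr 1; omega
        exact hne h h6
    · exact absurd h1 (hx3 _ hj _ hi')
  · exfalso
    obtain ⟨i', hi', hyi⟩ := hyx i hi
    rw [Finset.mem_singleton] at he he'
    subst he
    rw [hyi] at he' hui
    rcases Sym2.eq_iff.1 he' with ⟨h1, h2⟩ | ⟨h1, h2⟩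
    · have h3 := hx2 _ hl _ hz (f.injective h2)
      refine hne (by omega) (f.injective ?_)
      rw [huj, hui, h1]
    · exact hx3 _ hj _ hz h1
  · exfalso
    rw [Finset.mem_singleton] at he
    subst he
    have hu4 : u' ∈ s(x j, f (x (a - 1))) := by
      rcases Finset.mem_insert.1 he' with h | h
      · rw [h]; simp
      · rw [Finset.mem_singleton.1 h]; simp
    rcases Sym2.mem_iff.1 hu4 with h | h
    · refine (hu3' (a - 1 - j) (by omega)).1 ?_
      simp only [hydef]
      rw [show a - 1 - (a - 1 - j) = j by omega, h]
    · exact (hu3' 0 hz).2 (by rw [hy0, h])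
  · exfalso
    obtain ⟨i', hi', hyi⟩ := hyx i hi
    rw [Finset.mem_singleton, hyi] at he'
    subst he'
    have hu4 : u ∈ s(x 0, f (x i')) := by
      rcases Finset.mem_insert.1 he with h | h
      · rw [h]; simp
      · rw [Finset.mem_singleton.1 h]; simp
    rcases Sym2.mem_iff.1 hu4 with h | h
    · exact (hu3 _ hz).1 h
    · exact (hu3 _ hi').2 h
  · exfalso
    obtain ⟨i', hi', hyi⟩ := hyx i hi
    rw [Finset.mem_singleton, hyi] at he'
    subst he'
    have hu4 : u ∈ s(x i', f (x 0)) := by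
      rcases Finset.mem_insert.1 he with h | h
      · rw [h]; simp
      · rw [Finset.mem_singleton.1 h]; simp
    rcases Sym2.mem_iff.1 hu4 with h | h
    · exact (hu3 _ hi').1 h
    · exact (hu3 _ hz).2 h
  · exfalso
    -- Both sets of edges contain exactly one vertex outside of the paths.
    have hu4 : ∃ v, e = s(v, u) ∧ (v = x (a - 1) ∨ v = f (x (a - 1))) := by
      rcases Finset.mem_insert.1 he with h | h
      · exact ⟨_, h, Or.inl rfl⟩
      · exact ⟨_, Finset.mem_singleton.1 h, Or.inr rfl⟩
    have hu4' : ∃ v, e = s(v, u') ∧ (v = x 0 ∨ v = f (x 0)) := by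
      rcases Finset.mem_insert.1 he' with h | h
      · exact ⟨_, h, Or.inl rfl⟩
      · exact ⟨_, Finset.mem_singleton.1 h, Or.inr rfl⟩
    obtain ⟨v, rfl, hv⟩ := hu4
    obtain ⟨v', hv1, hv'⟩ := hu4'
    rcases Sym2.eq_iff.1 hv1 with ⟨h1, h2⟩ | ⟨h1, h2⟩
    · have ha1 : a - 1 = 0 := by
        rw [h1] at hv
        rcases hv with h | h <;> rcases hv' with h' | h'
        · exact hx2 _ hl _ hz (h.symm.trans h')
        · exact absurd (h.symm.trans h') (hx3 _ hl _ hz)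
        · exact absurd (h'.symm.trans h) (hx3 _ hz _ hl)
        · exact hx2 _ hl _ hz (f.injective (h.symm.trans h'))
      exact hne (by omega) h2
    · rw [← h2] at hv'
      rcases hv' with h | h
      · exact (hu3 0 hz).1 h
      · exact (hu3 0 hz).2 h

/-- An automorphism that moves a vertex of a set inducing minimum degree at least two forces a long
pair of paths, a short pair of paths with extra edges, a long periodic path, or a periodic path with
a further edge. -/
lemma configurations (hF : F ⊆ allE V) (hf : ∀ u v, s(f u, f v) ∈ F ↔ s(u, v) ∈ F) {m : ℕ}
    (hm : ∀ v, dg F v ≤ m) (M : ℕ) {S : Set V}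
    (hS : ∀ v ∈ S, 2 ≤ ({u ∈ S | s(v, u) ∈ F} : Set V).ncard) {v : V} (hv : v ∈ S) (hfv : f v ≠ v)
    {r : ℕ} (hr : 1 ≤ r) :
    HasPair F M m r 0 0 ∨ (∃ a, 1 ≤ a ∧ a < r ∧ ∃ t ≤ 2, HasPair F M m a t (t + 2)) ∨
      (∃ L, 1 ≤ L ∧ L ≤ r ∧ HasPer F M m L (L + r) 0) ∨
      ∃ a L, 1 ≤ L ∧ L ≤ a ∧ a < r ∧ HasPer F M m L (L + a) 1 := by
  by_cases hfr : ∃ x, Fresh F f S r x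
  · obtain ⟨x, hx⟩ := hfr
    left
    exact hasPair_of hf hm M hx (E := ∅) (T := ∅) ⟨by simp, by simp, by simp⟩ rfl (by simp)
  right
  have h1 : ∃ x, Fresh F f S 1 x := by
    refine ⟨fun _ => v, fun _ _ => hv, fun i hi => by omega, fun i hi j hj _ => by omega, ?_⟩
    intro _ _ _ _ h
    exact hfv h.symm
  obtain ⟨a, ha, har, hax, hmax⟩ : ∃ a, 1 ≤ a ∧ a < r ∧ (∃ x, Fresh F f S a x) ∧
      ¬ ∃ x, Fresh F f S (a + 1) x := by
    by_contra hcon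
    push Not at hcon
    have : ∀ a, 1 ≤ a → a ≤ r → ∃ x, Fresh F f S a x := by
      intro a ha
      induction a, ha using Nat.le_induction with
      | base => exact fun _ => h1
      | succ a ha ih => exact fun h => hcon a ha (by omega) (ih (by omega))
    exact hfr (this r hr le_rfl)
  obtain ⟨x, hx⟩ := hax
  rcases max_fresh hF hf hm M hS ha hx hmax with h | ⟨y, hy, hy1, hy2⟩
  · exact Or.inl ⟨a, ha, har, h⟩
  · right
    rcases translation hF hf hm M (r := r) ha hy hy1 hy2 with h | ⟨b, hb1, hb2, h⟩
    · exact Or.inl ⟨a, ha, har.le, h⟩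
    · exact Or.inr ⟨b, a, ha, hb1, hb2, h⟩

end Aut

/-! ### The probability that some configuration is present -/

/-- The Chernoff bound for the maximum degree. -/
lemma max_dg_bound {p : ℝ} (hp0 : 0 ≤ p) (hp1 : p ≤ 1) (m : ℕ) :
    ex p (allE V) (fun F => ind (∃ v, m < dg F v)) ≤
      Fintype.card V * (Real.exp (Fintype.card V * p) / 2 ^ m) := by
  have h1 : ex p (allE V) (fun F => ind (∃ v, m < dg F v)) ≤
      ex p (allE V) (fun F => ∑ v : V, ind (m < dg F v)) := by
    refine ex_mono hp0 hp1 fun F _ => ?_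
    by_cases h : ∃ v, m < dg F v
    · rw [ind_true h]
      obtain ⟨v, hv⟩ := h
      rw [← ind_true hv]
      exact Finset.single_le_sum (f := fun v => ind (m < dg F v))
        (fun w _ => ind_nonneg _) (Finset.mem_univ v)
    · rw [ind_false h]
      exact Finset.sum_nonneg fun w _ => ind_nonneg _
  refine h1.trans ?_
  rw [ex_sum, ← nsmul_eq_mul, ← Finset.card_univ, ← Finset.sum_const]
  refine Finset.sum_le_sum fun v _ => ?_
  set star := (Finset.univ.erase v).image (fun u => s(v, u)) with hstar
  have hinj : Function.Injective (fun u => s(v, u)) := fun a b h => Sym2.congr_right.1 h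
  have hsub : star ⊆ allE V := by
    intro e he
    obtain ⟨u, hu, rfl⟩ := Finset.mem_image.1 he
    have := Finset.ne_of_mem_erase hu
    simp [allE, this.symm]
  have hdg : ∀ F ⊆ allE V, dg F v = (F ∩ star).card := by
    intro F hF
    rw [dg, ← Finset.card_image_of_injective _ hinj]
    congr 1
    ext e
    simp only [Finset.mem_image, mem_nb, Finset.mem_inter, hstar]
    constructor
    · rintro ⟨u, hu, rfl⟩
      refine ⟨hu, u, ?_, rfl⟩
      have := hF hu
      simp only [allE, Finset.mem_filter, Finset.mem_univ, true_and, Sym2.mk_isDiag_iff] at this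
      simpa using Ne.symm this
    · rintro ⟨h, u, -, rfl⟩
      exact ⟨u, h, rfl⟩
  have h2 : ex p (allE V) (fun F => ind (m < dg F v)) ≤
      ex p (allE V) (fun F => 1 / 2 ^ m * (fun A : Finset (Sym2 V) => (2 : ℝ) ^ A.card)
        (F ∩ star)) := by
    refine ex_mono hp0 hp1 fun F hF => ?_
    simp only
    rw [← hdg F hF]
    by_cases h : m < dg F v
    · rw [ind_true h, one_div, inv_mul_eq_div, one_le_div (by positivity)]
      exact pow_le_pow_right₀ (by norm_num) h.le
    · rw [ind_false h]; positivity
  refine h2.trans ?_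
  rw [ex_const_mul, ex_restrict hsub (fun A : Finset (Sym2 V) => (2 : ℝ) ^ A.card), ex_pow]
  have h3 : star.card ≤ Fintype.card V := by
    rw [hstar, Finset.card_image_of_injective _ hinj]
    exact Finset.card_le_univ _
  have h4 : (p * 2 + (1 - p)) ^ star.card ≤ Real.exp (Fintype.card V * p) := by
    rw [Real.exp_nat_mul]
    calc (p * 2 + (1 - p)) ^ star.card ≤ (p * 2 + (1 - p)) ^ Fintype.card V :=
          pow_le_pow_right₀ (by linarith) h3
      _ ≤ _ := by
          have := Real.add_one_le_exp p
          exact pow_le_pow_left₀ (by linarith) (by linarith) _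
  rw [one_div, inv_mul_eq_div, Finset.card_univ]
  gcongr

lemma modρ_notMem {L s : ℕ} (hL : 1 ≤ L) (z : Fin s) :
    modρ L s z ∉ Finset.univ.filter (fun i : Fin s => L ≤ i.1) := by
  simp only [modρ, Finset.mem_filter, Finset.mem_univ, true_and, not_le]
  exact Nat.mod_lt _ (by omega)

lemma card_filter_le_fin (L a : ℕ) :
    (Finset.univ.filter (fun i : Fin (L + a) => L ≤ i.1)).card = a := by
  have h1 : (Finset.univ.filter (fun i : Fin (L + a) => L ≤ i.1)) =
      Finset.univ.image (Fin.natAdd L) := by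
    ext i
    simp only [Finset.mem_filter, Finset.mem_univ, true_and, Finset.mem_image]
    constructor
    · intro h
      exact ⟨⟨i.1 - L, by have := i.2; omega⟩, Fin.ext (by simp; omega)⟩
    · rintro ⟨j, rfl⟩
      simp
  rw [h1, Finset.card_image_of_injective _ (Fin.natAdd_injective _ _), Finset.card_univ,
    Fintype.card_fin]

section Total
variable {p : ℝ} {N M m k r : ℕ} {β E : ℝ}

lemma pair_bound (hp0 : 0 ≤ p) (hp1 : p ≤ 1)
    (hβ : ∀ (U : Finset (Sym2 V)) (f : ℕ) (b : ℕ → Prop), N ≤ U.card →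
      ex p U (fun F => ind (∀ j < M, (f + F.card).testBit j = true ↔ b j)) ≤ β) (hβ0 : 0 ≤ β)
    (hm : ∀ s ≤ 2 * r + 2, N + s * (m + 1) ≤ Fintype.card V)
    (hn : ∀ s ≤ 2 * r + 2, (Fintype.card V : ℝ) / 2 ≤ (Fintype.card V - s : ℝ) * (1 - p) ^ (s - 1))
    (hE : E = 2 ^ k * Real.exp (-(p * Fintype.card V / 4)) + β ^ k * (k.choose (k / 2) : ℝ) ^ M)
    {a t : ℕ} (k' : ℕ) (ha : a ≤ r) (ht : t ≤ 2) :
    ex p (allE V) (fun F => ind (HasPair F M m a t k')) ≤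
      (Fintype.card V : ℝ) ^ (2 * a + t) * (((2 * a + t : ℝ) ^ 2) ^ k' *
        p ^ (2 * (a - 1) + k') * E ^ a) := by
  have hs : Fintype.card (Fin a ⊕ Fin a ⊕ Fin t) = 2 * a + t := by simp; ring
  have := shape_bound (M := M) hp0 hp1 hβ (m := m) (k := k) hβ0 (ι := Fin a ⊕ Fin a ⊕ Fin t)
    (by rw [hs]; exact hm _ (by omega)) (by rw [hs]; exact hn _ (by omega)) (pairE a t)
    (fun e he => pairE_not_diag he) (Finset.univ.image Sum.inl) (pairρ a t)
    (by simp [pairρ]) k'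
  rw [hs, pairE_card, Finset.card_image_of_injective _ Sum.inl_injective, Finset.card_univ,
    Fintype.card_fin, ← hE] at this
  push_cast at this
  exact this

lemma per_bound (hp0 : 0 ≤ p) (hp1 : p ≤ 1)
    (hβ : ∀ (U : Finset (Sym2 V)) (f : ℕ) (b : ℕ → Prop), N ≤ U.card →
      ex p U (fun F => ind (∀ j < M, (f + F.card).testBit j = true ↔ b j)) ≤ β) (hβ0 : 0 ≤ β)
    (hm : ∀ s ≤ 2 * r + 2, N + s * (m + 1) ≤ Fintype.card V)
    (hn : ∀ s ≤ 2 * r + 2, (Fintype.card V : ℝ) / 2 ≤ (Fintype.card V - s : ℝ) * (1 - p) ^ (s - 1))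
    (hE : E = 2 ^ k * Real.exp (-(p * Fintype.card V / 4)) + β ^ k * (k.choose (k / 2) : ℝ) ^ M)
    {L a : ℕ} (k' : ℕ) (hL : 1 ≤ L) (hLr : L ≤ r) (ha : a ≤ r) :
    ex p (allE V) (fun F => ind (HasPer F M m L (L + a) k')) ≤
      (Fintype.card V : ℝ) ^ (L + a) * (((L + a : ℝ) ^ 2) ^ k' *
        p ^ (L + a - 1 + k') * E ^ a) := by
  have := shape_bound (M := M) hp0 hp1 hβ (m := m) (k := k) hβ0 (ι := Fin (L + a))
    (by rw [Fintype.card_fin]; exact hm _ (by omega))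
    (by rw [Fintype.card_fin]; exact hn _ (by omega)) (pathE (L + a))
    (fun e he => pathE_not_diag he) (Finset.univ.filter (fun i => L ≤ i.1)) (modρ L (L + a))
    (fun z _ => modρ_notMem hL z) k'
  rw [Fintype.card_fin, pathE_card, card_filter_le_fin, ← hE] at this
  push_cast at this
  exact this

/-- The probability that some automorphism moves a vertex of a set inducing minimum degree at least
two. -/
lemma total_bound (hp0 : 0 ≤ p) (hp1 : p ≤ 1)
    (hβ : ∀ (U : Finset (Sym2 V)) (f : ℕ) (b : ℕ → Prop), N ≤ U.card →
      ex p U (fun F => ind (∀ j < M, (f + F.card).testBit j = true ↔ b j)) ≤ β) (hβ0 : 0 ≤ β)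
    (hm : ∀ s ≤ 2 * r + 2, N + s * (m + 1) ≤ Fintype.card V)
    (hn : ∀ s ≤ 2 * r + 2, (Fintype.card V : ℝ) / 2 ≤ (Fintype.card V - s : ℝ) * (1 - p) ^ (s - 1))
    (hE : E = 2 ^ k * Real.exp (-(p * Fintype.card V / 4)) + β ^ k * (k.choose (k / 2) : ℝ) ^ M)
    (hr : 1 ≤ r) (hr2 : Fintype.card V ≤ 2 ^ r) {d θ : ℝ} (hd : d = Fintype.card V * p)
    (hd1 : 1 ≤ d) (hθ : θ = d ^ 4 * E) (hθ1 : 512 * θ ≤ 1) :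
    ex p (allE V) (fun F => ind (∃ f : Equiv.Perm V, (∀ u v, s(f u, f v) ∈ F ↔ s(u, v) ∈ F) ∧
      ∃ S : Set V, (∀ v ∈ S, 2 ≤ ({u ∈ S | s(v, u) ∈ F} : Set V).ncard) ∧
      ∃ v ∈ S, f v ≠ v)) ≤ Fintype.card V * (Real.exp d / 2 ^ m) + 1000000 * θ := by
  have hE0 : 0 ≤ E := by rw [hE]; positivity
  have hd0 : 0 ≤ d := by linarith
  have hθ0 : 0 ≤ θ := by rw [hθ]; positivity
  have hpt : ∀ F ⊆ allE V, ind (∃ f : Equiv.Perm V, (∀ u v, s(f u, f v) ∈ F ↔ s(u, v) ∈ F) ∧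
      ∃ S : Set V, (∀ v ∈ S, 2 ≤ ({u ∈ S | s(v, u) ∈ F} : Set V).ncard) ∧
      ∃ v ∈ S, f v ≠ v) ≤ ∑ i : Fin 5, (![fun F => ind (∃ v, m < dg F v),
        fun F => ind (HasPair F M m r 0 0),
        fun F => ∑ a ∈ Finset.Ico 1 r, ∑ t ∈ Finset.range 3, ind (HasPair F M m a t (t + 2)),
        fun F => ∑ L ∈ Finset.Icc 1 r, ind (HasPer F M m L (L + r) 0),
        fun F => ∑ a ∈ Finset.Ico 1 r, ∑ L ∈ Finset.Icc 1 a, ind (HasPer F M m L (L + a) 1)] :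
        Fin 5 → Finset (Sym2 V) → ℝ) i F := by
    intro F hF
    simp only [Fin.sum_univ_five, Matrix.cons_val]
    have h1 := ind_nonneg (∃ v, m < dg F v)
    have h2 := ind_nonneg (HasPair F M m r 0 0)
    have h3 : 0 ≤ ∑ a ∈ Finset.Ico 1 r, ∑ t ∈ Finset.range 3, ind (HasPair F M m a t (t + 2)) :=
      Finset.sum_nonneg fun _ _ => Finset.sum_nonneg fun _ _ => ind_nonneg _
    have h4 : 0 ≤ ∑ L ∈ Finset.Icc 1 r, ind (HasPer F M m L (L + r) 0) :=
      Finset.sum_nonneg fun _ _ => ind_nonneg _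
    have h5 : 0 ≤ ∑ a ∈ Finset.Ico 1 r, ∑ L ∈ Finset.Icc 1 a, ind (HasPer F M m L (L + a) 1) :=
      Finset.sum_nonneg fun _ _ => Finset.sum_nonneg fun _ _ => ind_nonneg _
    by_cases hbad : ∃ f : Equiv.Perm V, (∀ u v, s(f u, f v) ∈ F ↔ s(u, v) ∈ F) ∧
      ∃ S : Set V, (∀ v ∈ S, 2 ≤ ({u ∈ S | s(v, u) ∈ F} : Set V).ncard) ∧ ∃ v ∈ S, f v ≠ v
    swap
    · rw [ind_false hbad]; linarith
    rw [ind_true hbad]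
    obtain ⟨f, hf, S, hS, v, hv, hfv⟩ := hbad
    by_cases hmd : ∃ v, m < dg F v
    · rw [ind_true hmd]; linarith
    push Not at hmd
    rcases configurations hF hf hmd M hS hv hfv hr with h | ⟨a, ha, har, t, ht, h⟩ |
      ⟨L, hL, hLr, h⟩ | ⟨a, L, hL, hLa, har, h⟩
    · rw [ind_true h]; linarith
    · have h6 : (1 : ℝ) ≤
          ∑ a ∈ Finset.Ico 1 r, ∑ t ∈ Finset.range 3, ind (HasPair F M m a t (t + 2)) := by
        refine le_trans ?_ (Finset.single_le_sum
          (f := fun a => ∑ t ∈ Finset.range 3, ind (HasPair F M m a t (t + 2)))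
          (fun _ _ => Finset.sum_nonneg fun _ _ => ind_nonneg _)
          (Finset.mem_Ico.2 ⟨ha, har⟩))
        rw [← ind_true h]
        exact Finset.single_le_sum (f := fun t => ind (HasPair F M m a t (t + 2)))
          (fun _ _ => ind_nonneg _) (Finset.mem_range.2 (by omega))
      linarith
    · have h6 : (1 : ℝ) ≤ ∑ L ∈ Finset.Icc 1 r, ind (HasPer F M m L (L + r) 0) := by
        rw [← ind_true h]
        exact Finset.single_le_sum (f := fun L => ind (HasPer F M m L (L + r) 0))
          (fun _ _ => ind_nonneg _) (Finset.mem_Icc.2 ⟨hL, hLr⟩)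
      linarith
    · have h6 : (1 : ℝ) ≤
          ∑ a ∈ Finset.Ico 1 r, ∑ L ∈ Finset.Icc 1 a, ind (HasPer F M m L (L + a) 1) := by
        refine le_trans ?_ (Finset.single_le_sum
          (f := fun a => ∑ L ∈ Finset.Icc 1 a, ind (HasPer F M m L (L + a) 1))
          (fun _ _ => Finset.sum_nonneg fun _ _ => ind_nonneg _)
          (Finset.mem_Ico.2 ⟨by omega, har⟩))
        rw [← ind_true h]
        exact Finset.single_le_sum (f := fun L => ind (HasPer F M m L (L + a) 1))
          (fun _ _ => ind_nonneg _) (Finset.mem_Icc.2 ⟨hL, hLa⟩)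
      linarith
  refine (ex_mono hp0 hp1 hpt).trans ?_
  rw [ex_sum, Fin.sum_univ_five]
  simp only [Matrix.cons_val]
  simp only [ex_sum]
  have hnr : (Fintype.card V : ℝ) ≤ 2 ^ r := by exact_mod_cast hr2
  have hn0 : (0 : ℝ) ≤ Fintype.card V := by positivity
  -- At most four vertices of a pattern are charged to each coincidence.
  have hEθ : ∀ a b : ℕ, b ≤ 4 * a → d ^ b * E ^ a ≤ θ ^ a := by
    intro a b hb
    rw [hθ, mul_pow, ← pow_mul]
    gcongr
  have hθr : (2 : ℝ) ^ r * 2 ^ r * θ ^ r ≤ 4 * θ := by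
    have h1 : (2 : ℝ) ^ r * 2 ^ r * θ ^ r = (4 * θ) ^ r := by
      rw [← mul_pow, ← mul_pow]; norm_num
    rw [h1]
    exact pow_le_of_le_one (by positivity) (by linarith) (by omega)
  have hA : ex p (allE V) (fun F => ind (∃ v, m < dg F v)) ≤
      Fintype.card V * (Real.exp d / 2 ^ m) := by
    rw [hd]; exact max_dg_bound hp0 hp1 m
  have hB : ex p (allE V) (fun F => ind (HasPair F M m r 0 0)) ≤ 4 * θ := by
    refine (pair_bound hp0 hp1 hβ hβ0 hm hn hE 0 le_rfl (by omega)).trans ?_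
    calc (Fintype.card V : ℝ) ^ (2 * r + 0) * (((2 * r + (0 : ℕ) : ℝ) ^ 2) ^ 0 *
          p ^ (2 * (r - 1) + 0) * E ^ r)
        = (Fintype.card V : ℝ) * Fintype.card V * (d ^ (2 * (r - 1)) * E ^ r) := by
          rw [hd, mul_pow, show 2 * r + 0 = 2 * (r - 1) + 2 by omega, pow_add]
          simp only [pow_zero, one_mul, add_zero]
          ring
      _ ≤ 2 ^ r * 2 ^ r * θ ^ r := by
          gcongr
          exact hEθ _ _ (by omega)
      _ ≤ 4 * θ := hθr
  have hC : ∑ L ∈ Finset.Icc 1 r, ex p (allE V) (fun F => ind (HasPer F M m L (L + r) 0)) ≤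
      4 * θ := by
    have h1 : ∀ L ∈ Finset.Icc 1 r, ex p (allE V) (fun F => ind (HasPer F M m L (L + r) 0)) ≤
        2 ^ r * θ ^ r := by
      intro L hL
      obtain ⟨hL1, hL2⟩ := Finset.mem_Icc.1 hL
      refine (per_bound hp0 hp1 hβ hβ0 hm hn hE 0 hL1 hL2 le_rfl).trans ?_
      calc (Fintype.card V : ℝ) ^ (L + r) * (((L + r : ℝ) ^ 2) ^ 0 *
            p ^ (L + r - 1 + 0) * E ^ r)
          = (Fintype.card V : ℝ) * (d ^ (L + r - 1) * E ^ r) := by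
            rw [hd, mul_pow]
            nth_rw 1 [show L + r = (L + r - 1) + 1 by omega]
            rw [pow_succ]
            simp only [pow_zero, one_mul, add_zero]
            ring
        _ ≤ 2 ^ r * θ ^ r := by
            gcongr
            exact hEθ _ _ (by omega)
    refine (Finset.sum_le_card_nsmul _ _ _ h1).trans ?_
    rw [Nat.card_Icc, nsmul_eq_mul, add_tsub_cancel_right, ← mul_assoc]
    refine le_trans ?_ hθr
    gcongr
    exact_mod_cast Nat.lt_two_pow_self.le
  have hpow : ∀ a : ℕ, (a : ℝ) ≤ 2 ^ a := fun a => by exact_mod_cast Nat.lt_two_pow_self.le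
  have hgeom : ∑ a ∈ Finset.Ico 1 r, (256 * θ) ^ a ≤ 512 * θ := by
    have h1 : (∑ a ∈ Finset.Ico 1 r, (256 * θ) ^ a) * (1 - 256 * θ) ≤ 256 * θ := by
      have := geom_sum_Ico_mul_neg (256 * θ) hr
      rw [this, pow_one]
      have : 0 ≤ (256 * θ) ^ r := by positivity
      linarith
    have h0 : 0 ≤ ∑ a ∈ Finset.Ico 1 r, (256 * θ) ^ a := Finset.sum_nonneg fun _ _ => by positivity
    nlinarith
  have hD : ∑ a ∈ Finset.Ico 1 r, ∑ t ∈ Finset.range 3,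
      ex p (allE V) (fun F => ind (HasPair F M m a t (t + 2))) ≤ 768 * (512 * θ) := by
    refine le_trans ?_ (mul_le_mul_of_nonneg_left hgeom (by norm_num))
    rw [Finset.mul_sum]
    refine Finset.sum_le_sum fun a ha => ?_
    obtain ⟨ha1, ha2⟩ := Finset.mem_Ico.1 ha
    have h1 : ∀ t ∈ Finset.range 3, ex p (allE V) (fun F => ind (HasPair F M m a t (t + 2))) ≤
        256 * (256 * θ) ^ a := by
      intro t ht
      have ht' : t ≤ 2 := by have := Finset.mem_range.1 ht; omega
      refine (pair_bound hp0 hp1 hβ hβ0 hm hn hE (t + 2) ha2.le ht').trans ?_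
      have ht2 : (t : ℝ) ≤ 2 := by exact_mod_cast ht'
      have ha1' : (1 : ℝ) ≤ a := by exact_mod_cast ha1
      calc (Fintype.card V : ℝ) ^ (2 * a + t) * (((2 * a + t : ℝ) ^ 2) ^ (t + 2) *
            p ^ (2 * (a - 1) + (t + 2)) * E ^ a)
          = ((2 * a + t : ℝ) ^ 2) ^ (t + 2) * (d ^ (2 * a + t) * E ^ a) := by
            rw [hd, mul_pow, show 2 * (a - 1) + (t + 2) = 2 * a + t by omega]
            ring
        _ ≤ ((2 * 2 ^ a : ℝ) ^ 2) ^ 4 * θ ^ a := by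
            gcongr ?_ * ?_
            · have h2 : (2 * a + t : ℝ) ≤ 2 * 2 ^ a := by
                have h3 : a + 1 ≤ 2 ^ a := Nat.lt_two_pow_self
                have h4 : (a + 1 : ℝ) ≤ 2 ^ a := by exact_mod_cast h3
                linarith
              have h5 : (1 : ℝ) ≤ (2 * 2 ^ a : ℝ) ^ 2 := one_le_pow₀ (by linarith)
              calc ((2 * a + t : ℝ) ^ 2) ^ (t + 2) ≤ ((2 * 2 ^ a : ℝ) ^ 2) ^ (t + 2) := by gcongr
                _ ≤ _ := pow_le_pow_right₀ h5 (by omega)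
            · exact hEθ _ _ (by omega)
        _ = 256 * (256 * θ) ^ a := by
            rw [mul_pow 256 θ, show (256 : ℝ) = 2 ^ 8 by norm_num, ← pow_mul, ← pow_mul]
            ring
    refine (Finset.sum_le_card_nsmul _ _ _ h1).trans (le_of_eq ?_)
    rw [Finset.card_range, nsmul_eq_mul]
    push_cast; ring
  have hG : ∑ a ∈ Finset.Ico 1 r, ∑ L ∈ Finset.Icc 1 a,
      ex p (allE V) (fun F => ind (HasPer F M m L (L + a) 1)) ≤ 4 * (512 * θ) := by
    refine le_trans ?_ (mul_le_mul_of_nonneg_left hgeom (by norm_num))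
    rw [Finset.mul_sum]
    refine Finset.sum_le_sum fun a ha => ?_
    obtain ⟨ha1, ha2⟩ := Finset.mem_Ico.1 ha
    have h1 : ∀ L ∈ Finset.Icc 1 a, ex p (allE V) (fun F => ind (HasPer F M m L (L + a) 1)) ≤
        (2 * 2 ^ a) ^ 2 * θ ^ a := by
      intro L hL
      obtain ⟨hL1, hL2⟩ := Finset.mem_Icc.1 hL
      have hL2' : (L : ℝ) ≤ a := by exact_mod_cast hL2
      refine (per_bound hp0 hp1 hβ hβ0 hm hn hE 1 hL1 (by omega) ha2.le).trans ?_
      calc (Fintype.card V : ℝ) ^ (L + a) * (((L + a : ℝ) ^ 2) ^ 1 *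
            p ^ (L + a - 1 + 1) * E ^ a)
          = (L + a : ℝ) ^ 2 * (d ^ (L + a) * E ^ a) := by
            rw [hd, mul_pow, show L + a - 1 + 1 = L + a by omega]
            ring
        _ ≤ (2 * 2 ^ a : ℝ) ^ 2 * θ ^ a := by
            gcongr ?_ ^ 2 * ?_
            · have := hpow a
              linarith
            · exact hEθ _ _ (by omega)
    refine (Finset.sum_le_card_nsmul _ _ _ h1).trans ?_
    rw [Nat.card_Icc, nsmul_eq_mul, add_tsub_cancel_right]
    calc (a : ℝ) * ((2 * 2 ^ a) ^ 2 * θ ^ a) ≤ 2 ^ a * ((2 * 2 ^ a) ^ 2 * θ ^ a) := by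
          gcongr; exact hpow a
      _ = 4 * (8 * θ) ^ a := by
          rw [mul_pow 8 θ, show (8 : ℝ) = 2 ^ 3 by norm_num, ← pow_mul]
          ring
      _ ≤ 4 * (256 * θ) ^ a := by gcongr; norm_num
  linarith

end Total

end Graph

/-! ### From sets of edges to graphs -/

lemma gnpProb_eq_ex (n : ℕ) (p : ℝ) (A : Set (SimpleGraph (Fin n))) :
    gnpProb n p A =
      ex p (allE (Fin n)) (fun F => ind (SimpleGraph.fromEdgeSet (F : Set (Sym2 (Fin n))) ∈ A)) := by
  have hcard : (allE (Fin n)).card = n.choose 2 := by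
    have := Sym2.card_subtype_not_diag (α := Fin n)
    rw [Fintype.card_fin, Fintype.card_subtype] at this
    rw [← this, allE]
  unfold gnpProb ex
  rw [hcard]
  refine Finset.sum_bij' (fun G _ => G.edgeFinset)
    (fun F _ => SimpleGraph.fromEdgeSet (F : Set (Sym2 (Fin n)))) ?_ ?_ ?_ ?_ ?_
  · intro G _
    rw [Finset.mem_powerset]
    intro e he
    have := G.not_isDiag_of_mem_edgeFinset he
    simpa [allE] using this
  · intro F _
    exact Finset.mem_univ _
  · intro G _
    simp
  · intro F hF
    rw [Finset.mem_powerset] at hF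
    ext e
    simp only [SimpleGraph.mem_edgeFinset, SimpleGraph.edgeSet_fromEdgeSet, Set.mem_sdiff,
      Finset.mem_coe]
    constructor
    · exact fun h => h.1
    · intro h
      have := hF h
      simp only [allE, Finset.mem_filter, Finset.mem_univ, true_and] at this
      exact ⟨h, by simpa using this⟩
  · intro G _
    simp only [SimpleGraph.coe_edgeFinset, SimpleGraph.fromEdgeSet_edgeSet]
    by_cases h : G ∈ A
    · rw [if_pos h, ind_true h, mul_one]; rfl
    · rw [if_neg h, ind_false h, mul_zero]

lemma gnpProb_le_one {p : ℝ} (hp0 : 0 ≤ p) (hp1 : p ≤ 1) (n : ℕ)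
    (A : Set (SimpleGraph (Fin n))) : gnpProb n p A ≤ 1 := by
  rw [gnpProb_eq_ex, ← ex_one (p := p) (allE (Fin n))]
  exact ex_mono hp0 hp1 fun F _ => ind_le_one _

/-- Reduction to the existence of a permutation preserving the edge set and moving a vertex of
some set that induces minimum degree at least two. -/
lemma one_sub_le_gnpProb {p : ℝ} (hp0 : 0 ≤ p) (hp1 : p ≤ 1) (n : ℕ) :
    1 - ex p (allE (Fin n)) (fun F => ind (∃ f : Equiv.Perm (Fin n),
      (∀ u v, s(f u, f v) ∈ F ↔ s(u, v) ∈ F) ∧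
      ∃ S : Set (Fin n), (∀ v ∈ S, 2 ≤ ({u ∈ S | s(v, u) ∈ F} : Set (Fin n)).ncard) ∧
      ∃ v ∈ S, f v ≠ v)) ≤
    gnpProb n p {G : SimpleGraph (Fin n) | ∀ f : G ≃g G, ∀ v ∈ twoCore G, f v = v} := by
  rw [gnpProb_eq_ex, ← ex_one (p := p) (allE (Fin n)), ← ex_sub]
  refine ex_mono hp0 hp1 fun F hF => ?_
  have hadj : ∀ u v, (SimpleGraph.fromEdgeSet (F : Set (Sym2 (Fin n)))).Adj u v ↔ s(u, v) ∈ F := by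
    intro u v
    rw [SimpleGraph.fromEdgeSet_adj, Finset.mem_coe]
    constructor
    · exact fun h => h.1
    · intro h
      have := hF h
      simp only [allE, Finset.mem_filter, Finset.mem_univ, true_and, Sym2.mk_isDiag_iff] at this
      exact ⟨h, this⟩
  by_cases hG : SimpleGraph.fromEdgeSet (F : Set (Sym2 (Fin n))) ∈
      {G : SimpleGraph (Fin n) | ∀ f : G ≃g G, ∀ v ∈ twoCore G, f v = v}
  · rw [ind_true hG]
    linarith [ind_nonneg (∃ f : Equiv.Perm (Fin n),
      (∀ u v, s(f u, f v) ∈ F ↔ s(u, v) ∈ F) ∧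
      ∃ S : Set (Fin n), (∀ v ∈ S, 2 ≤ ({u ∈ S | s(v, u) ∈ F} : Set (Fin n)).ncard) ∧
      ∃ v ∈ S, f v ≠ v)]
  · rw [ind_false hG, ind_true, sub_self]
    simp only [Set.mem_ofPred_eq, not_forall] at hG
    obtain ⟨f, v, hv, hfv⟩ := hG
    obtain ⟨S, hS, hvS⟩ := hv
    refine ⟨f.toEquiv, fun u w => ?_, S, fun w hw => ?_, v, hvS, hfv⟩
    · rw [← hadj, ← hadj]
      exact f.map_adj_iff
    · have := hS w hw
      simpa only [hadj] using this

/-! ### Asymptotics -/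

lemma centralBinom_sq_le (j : ℕ) : j.centralBinom ^ 2 * (2 * j + 1) ≤ 16 ^ j := by
  induction j with
  | zero => simp
  | succ j ih =>
    have h := Nat.succ_mul_centralBinom_succ j
    have hpos : 0 < (j + 1) ^ 2 := by positivity
    refine Nat.le_of_mul_le_mul_left ?_ hpos
    calc (j + 1) ^ 2 * ((j + 1).centralBinom ^ 2 * (2 * (j + 1) + 1))
        = ((j + 1) * (j + 1).centralBinom) ^ 2 * (2 * j + 3) := by ring
      _ = (2 * (2 * j + 1) * j.centralBinom) ^ 2 * (2 * j + 3) := by rw [h]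
      _ = 4 * ((2 * j + 1) * (2 * j + 3)) * (j.centralBinom ^ 2 * (2 * j + 1)) := by ring
      _ ≤ 4 * (4 * (j + 1) ^ 2) * 16 ^ j := by
          have h1 : (2 * j + 1) * (2 * j + 3) ≤ 4 * (j + 1) ^ 2 := by nlinarith
          exact Nat.mul_le_mul (Nat.mul_le_mul_left 4 h1) ih
      _ = (j + 1) ^ 2 * 16 ^ (j + 1) := by ring

/-- With ten binary digits, the chance that two vertices share their statistics decays faster
than the fourth power of the average degree `d`. -/
lemma theta_bound {κ d δ : ℝ} (hd : 16 ≤ d) (hδ0 : 0 ≤ δ)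
    (hδ : δ = 2 ^ 10 * Real.exp (-(κ * d / 3))) (hsmall : 128 * (d * Real.exp (-(κ * d / 3))) ≤ 1 / 2)
    {j : ℕ} (hj : j = ⌊d / 16⌋₊) :
    d ^ 4 * (2 ^ (2 * j) * Real.exp (-(d / 4)) +
      ((1 + δ) / 2 ^ 10) ^ (2 * j) * ((2 * j).choose (2 * j / 2) : ℝ) ^ 10) ≤
    d ^ 4 * Real.exp (-(d / 8)) + 2 * 16 ^ 5 / d := by
  have hd0 : 0 < d := by linarith
  have hj1 : (j : ℝ) ≤ d / 16 := by rw [hj]; exact Nat.floor_le (by positivity)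
  have hj2 : d / 16 < j + 1 := by rw [hj]; exact Nat.lt_floor_add_one _
  have hA : (2 : ℝ) ^ (2 * j) * Real.exp (-(d / 4)) ≤ Real.exp (-(d / 8)) := by
    have h1 : (2 : ℝ) ^ (2 * j) ≤ Real.exp (d / 8) := by
      have h2 : (2 : ℝ) ≤ Real.exp 1 := by linarith [Real.add_one_le_exp (1 : ℝ)]
      calc (2 : ℝ) ^ (2 * j) ≤ Real.exp 1 ^ (2 * j) := by gcongr
        _ = Real.exp (2 * j) := by rw [← Real.exp_nat_mul]; push_cast; ring_nf
        _ ≤ _ := Real.exp_le_exp.2 (by linarith)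
    calc _ ≤ Real.exp (d / 8) * Real.exp (-(d / 4)) := by gcongr
      _ = _ := by rw [← Real.exp_add]; ring_nf
  have hB : (1 + δ) ^ (2 * j) ≤ 2 := by
    have h1 : (1 + δ) ^ (2 * j) ≤ Real.exp (1 / 2) := by
      calc (1 + δ) ^ (2 * j) ≤ Real.exp δ ^ (2 * j) := by
            gcongr; linarith [Real.add_one_le_exp δ]
        _ = Real.exp (2 * j * δ) := by rw [← Real.exp_nat_mul]; push_cast; ring_nf
        _ ≤ _ := by
            apply Real.exp_le_exp.2
            refine le_trans ?_ hsmall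
            have : 2 * (j : ℝ) * δ ≤ d / 8 * δ := by gcongr; linarith
            rw [hδ] at this ⊢
            linarith
    have h2 := Real.add_one_le_exp (-(1 / 2) : ℝ)
    rw [Real.exp_neg] at h2
    have h3 : (Real.exp (1 / 2)) ≤ 2 := by
      rw [← inv_le_inv₀ (by norm_num) (Real.exp_pos _)]
      linarith
    linarith
  have hC : (((2 * j).choose (2 * j / 2) : ℝ)) ^ 10 * (2 * j + 1) ^ 5 ≤ (2 ^ 10) ^ (2 * j) := by
    have h1 : (2 * j).choose (2 * j / 2) = j.centralBinom := by
      rw [Nat.centralBinom, Nat.mul_div_cancel_left _ (by norm_num)]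
    have h2 : (j.centralBinom : ℝ) ^ 2 * (2 * j + 1) ≤ 16 ^ j := by
      exact_mod_cast centralBinom_sq_le j
    rw [h1]
    calc (j.centralBinom : ℝ) ^ 10 * (2 * j + 1) ^ 5
        = ((j.centralBinom : ℝ) ^ 2 * (2 * j + 1)) ^ 5 := by ring
      _ ≤ (16 ^ j) ^ 5 := by gcongr
      _ = _ := by
          rw [pow_mul, ← pow_mul, mul_comm j 5, pow_mul]; norm_num
  have hD : ((1 + δ) / 2 ^ 10) ^ (2 * j) * ((2 * j).choose (2 * j / 2) : ℝ) ^ 10 ≤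
      2 * 16 ^ 5 / d ^ 5 := by
    rw [div_pow, div_mul_eq_mul_div, div_le_div_iff₀ (by positivity) (by positivity)]
    have h1 : d ^ 5 ≤ 16 ^ 5 * (2 * j + 1) ^ 5 := by
      rw [← mul_pow]
      gcongr
      linarith
    calc (1 + δ) ^ (2 * j) * ((2 * j).choose (2 * j / 2) : ℝ) ^ 10 * d ^ 5
        ≤ 2 * ((2 * j).choose (2 * j / 2) : ℝ) ^ 10 * (16 ^ 5 * (2 * j + 1) ^ 5) := by gcongr
      _ = 2 * 16 ^ 5 * (((2 * j).choose (2 * j / 2) : ℝ) ^ 10 * (2 * j + 1) ^ 5) := by ring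
      _ ≤ _ := by gcongr
  calc _ ≤ d ^ 4 * (Real.exp (-(d / 8)) + 2 * 16 ^ 5 / d ^ 5) := by gcongr
    _ = _ := by field_simp

lemma tendsto_theta : Filter.Tendsto
    (fun d : ℝ => d ^ 4 * Real.exp (-(d / 8)) + 2 * 16 ^ 5 / d) Filter.atTop (nhds 0) := by
  have h1 : Filter.Tendsto (fun d : ℝ => d ^ 4 * Real.exp (-(d / 8))) Filter.atTop (nhds 0) := by
    have := (Real.tendsto_pow_mul_exp_neg_atTop_nhds_zero 4).comp
      (Filter.tendsto_id.atTop_div_const (by norm_num : (0 : ℝ) < 8))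
    have h2 := this.const_mul (8 ^ 4 : ℝ)
    rw [mul_zero] at h2
    refine h2.congr fun d => ?_
    simp only [Function.comp, id]
    ring
  have h2 : Filter.Tendsto (fun d : ℝ => 2 * 16 ^ 5 / d) Filter.atTop (nhds 0) :=
    Filter.tendsto_id.const_div_atTop _
  simpa using h1.add h2

lemma tendsto_mul_exp_neg {κ : ℝ} (hκ : 0 < κ) : Filter.Tendsto
    (fun d : ℝ => 128 * (d * Real.exp (-(κ * d / 3)))) Filter.atTop (nhds 0) := by
  have := (Real.tendsto_pow_mul_exp_neg_atTop_nhds_zero 1).comp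
    (Filter.tendsto_id.const_mul_atTop (by positivity : (0 : ℝ) < κ / 3))
  have h2 := this.const_mul (128 * (κ / 3)⁻¹)
  rw [mul_zero] at h2
  refine h2.congr fun d => ?_
  simp only [Function.comp, id, pow_one]
  rw [show κ / 3 * d = κ * d / 3 by ring]
  field_simp

lemma eventually_log_le_sqrt :
    ∀ᶠ n : ℕ in Filter.atTop, 24 * ((Nat.log 2 n + 1 : ℕ) : ℝ) + 24 ≤ √n := by
  have h1 : ∀ᶠ x : ℝ in Filter.atTop, Real.log x ≤ 1 / 96 * x ^ (1 / 2 : ℝ) := by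
    have := (isLittleO_log_rpow_atTop (by norm_num : (0 : ℝ) < 1 / 2)).bound
      (by norm_num : (0 : ℝ) < 1 / 96)
    filter_upwards [this, Filter.eventually_ge_atTop 1] with x hx hx1
    rw [Real.norm_of_nonneg (Real.log_nonneg hx1), Real.norm_of_nonneg (by positivity)] at hx
    exact hx
  filter_upwards [tendsto_natCast_atTop_atTop.eventually h1,
    tendsto_natCast_atTop_atTop.eventually (Filter.eventually_ge_atTop ((96 : ℝ) ^ 2))] with n hn hn2
  rw [← Real.sqrt_eq_rpow] at hn
  have h3 : (96 : ℝ) ≤ √n := Real.le_sqrt_of_sq_le hn2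
  have h4 : (Nat.log 2 n : ℝ) ≤ 2 * Real.log n := by
    have h5 := Real.natLog_le_logb n 2
    have h6 : (1 : ℝ) ≤ n := by linarith
    have h7 := Real.log_nonneg h6
    have h8 : (0.5 : ℝ) < Real.log 2 := by linarith [Real.log_two_gt_d9]
    refine h5.trans ?_
    rw [Real.logb, div_le_iff₀ (by push_cast; linarith)]
    push_cast
    nlinarith
  push_cast
  linarith

lemma tendsto_degree_error : Filter.Tendsto
    (fun n : ℕ => (n : ℝ) * Real.exp (-√n)) Filter.atTop (nhds 0) := by
  have h1 : Filter.Tendsto (fun n : ℕ => √(n : ℝ)) Filter.atTop Filter.atTop :=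
    Real.tendsto_sqrt_atTop.comp tendsto_natCast_atTop_atTop
  refine ((Real.tendsto_pow_mul_exp_neg_atTop_nhds_zero 2).comp h1).congr fun n => ?_
  simp [Real.sq_sqrt]

/-- If `n·p(n) → ∞` and `p(n) ≤ n^{-1/2-ε}`, then whp every automorphism of a `G(n,p)`
graph fixes every vertex of its 2-core. -/
theorem aut_fixes_twoCore_whp (ε : ℝ) (hε : 0 < ε) (p : ℕ → ℝ)
    (hp0 : ∀ n, 0 ≤ p n) (hp1 : ∀ n, p n ≤ 1)
    (hgrow : Filter.Tendsto (fun n : ℕ => (n : ℝ) * p n) Filter.atTop Filter.atTop)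
    (hupper : ∀ᶠ n : ℕ in Filter.atTop, p n ≤ (n : ℝ) ^ (-(1 / 2 : ℝ) - ε)) :
    Filter.Tendsto
      (fun n : ℕ => gnpProb n (p n)
        {G : SimpleGraph (Fin n) | ∀ f : G ≃g G, ∀ v ∈ twoCore G, f v = v})
      Filter.atTop (nhds 1) := by
  obtain ⟨κ, hκ, hbit⟩ := exists_ex_testBit_le 10
  set T : ℝ → ℝ := fun d => d ^ 4 * Real.exp (-(d / 8)) + 2 * 16 ^ 5 / d with hT
  have hTn : Filter.Tendsto (fun n : ℕ => T (n * p n)) Filter.atTop (nhds 0) :=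
    tendsto_theta.comp hgrow
  have hlow : Filter.Tendsto (fun n : ℕ => 1 - ((n : ℝ) * Real.exp (-√n) +
      1000000 * T (n * p n))) Filter.atTop (nhds 1) := by
    have := (tendsto_degree_error.add (hTn.const_mul 1000000)).const_sub 1
    simpa using this
  refine tendsto_of_tendsto_of_tendsto_of_le_of_le' hlow tendsto_const_nhds ?_
    (Filter.Eventually.of_forall fun n => gnpProb_le_one (hp0 n) (hp1 n) n _)
  filter_upwards [hupper, hgrow.eventually (Filter.eventually_ge_atTop 16),
    hgrow.eventually ((tendsto_mul_exp_neg hκ).eventually (ge_mem_nhds (by norm_num :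
      (0 : ℝ) < 1 / 2))),
    hTn.eventually (ge_mem_nhds (by norm_num : (0 : ℝ) < 1 / 512)),
    eventually_log_le_sqrt, Filter.eventually_ge_atTop 16] with n hup hd16 hsmall hT512 hlog hn16
  refine le_trans ?_ (one_sub_le_gnpProb (hp0 n) (hp1 n) n)
  have hn16' : (16 : ℝ) ≤ n := by exact_mod_cast hn16
  have hn0 : (0 : ℝ) < n := by linarith
  have hs0 : 0 < √(n : ℝ) := Real.sqrt_pos.2 hn0
  have hss : √(n : ℝ) * √n = n := Real.mul_self_sqrt hn0.le
  have hpn := hp0 n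
  have hpsq : p n * √n ≤ 1 := by
    have h1 : p n ≤ (n : ℝ) ^ (-(1 / 2 : ℝ)) :=
      hup.trans (Real.rpow_le_rpow_of_exponent_le (by linarith) (by linarith))
    rw [Real.rpow_neg hn0.le, ← Real.sqrt_eq_rpow] at h1
    calc p n * √n ≤ (√n)⁻¹ * √n := by gcongr
      _ = 1 := inv_mul_cancel₀ hs0.ne'
  have hs4 : (4 : ℝ) ≤ √n := Real.le_sqrt_of_sq_le (by linarith)
  have hphalf : p n ≤ 1 / 2 := by nlinarith
  set d : ℝ := n * p n with hd
  have hdsq : d ≤ √n := by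
    calc d = √n * (p n * √n) := by rw [hd]; linear_combination (-(p n)) * hss
      _ ≤ √n * 1 := by gcongr
      _ = √n := mul_one _
  -- Paths are long from `r` vertices on, where `n ≤ 2 ^ r`; all degrees are at most `m`; and
  -- `k = 2 * j`, about an eighth of the mean degree, private neighbours are used at each vertex.
  set r := Nat.log 2 n + 1 with hr
  set m := ⌈4 * √(n : ℝ)⌉₊ with hm
  set δ := 2 ^ 10 * Real.exp (-(κ * d / 3)) with hδ
  set j := ⌊d / 16⌋₊ with hj
  set E := 2 ^ (2 * j) * Real.exp (-(d / 4)) +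
      ((1 + δ) / 2 ^ 10) ^ (2 * j) * ((2 * j).choose (2 * j / 2) : ℝ) ^ 10 with hE
  have hδ0 : 0 ≤ δ := by positivity
  have hθ : d ^ 4 * E ≤ T d := theta_bound hd16 hδ0 hδ hsmall hj
  have hN : (n : ℝ) / 3 ≤ (n / 2 : ℕ) := by
    have h1 : n ≤ 3 * (n / 2) := by omega
    have h2 : (n : ℝ) ≤ 3 * (n / 2 : ℕ) := by exact_mod_cast h1
    linarith
  have hm1 : (m : ℝ) < 4 * √n + 1 := Nat.ceil_lt_add_one (by positivity)
  have hm2 : 4 * √n ≤ m := Nat.le_ceil _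
  have hsr : ∀ s ≤ 2 * r + 2, 12 * (s : ℝ) ≤ √n := by
    intro s hs
    have h1 : (s : ℝ) ≤ 2 * r + 2 := by exact_mod_cast hs
    linarith
  have hbound := total_bound (V := Fin n) (p := p n) (N := n / 2) (M := 10) (m := m) (k := 2 * j)
    (r := r) (β := (1 + δ) / 2 ^ 10) (E := E) (hp0 n) (hp1 n) ?_ (by positivity) ?_ ?_ ?_
    (by omega) ?_ (d := d) (θ := d ^ 4 * E) ?_ (by linarith) rfl (by linarith)
  · rw [Fintype.card_fin] at hbound
    have h1 : (n : ℝ) * (Real.exp d / 2 ^ m) ≤ n * Real.exp (-√n) := by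
      gcongr
      rw [div_le_iff₀ (by positivity)]
      have h2 : Real.exp (2 * √n) ≤ 2 ^ m := by
        have h8 : (0.5 : ℝ) < Real.log 2 := by linarith [Real.log_two_gt_d9]
        calc Real.exp (2 * √n) ≤ Real.exp (m * Real.log 2) :=
              Real.exp_le_exp.2 (by nlinarith)
          _ = 2 ^ m := by rw [Real.exp_nat_mul, Real.exp_log (by norm_num)]
      calc Real.exp d ≤ Real.exp (√n) := Real.exp_le_exp.2 hdsq
        _ = Real.exp (-√n) * Real.exp (2 * √n) := by rw [← Real.exp_add]; ring_nf
        _ ≤ _ := by gcongr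
    linarith
  · intro U f b hU
    refine (hbit (Sym2 (Fin n)) (p n) (hp0 n) hphalf U f b).trans ?_
    have hU' : (n : ℝ) / 3 ≤ U.card := hN.trans (by exact_mod_cast hU)
    rw [hδ]
    gcongr
    have h1 : κ * p n * (n / 3) ≤ κ * p n * U.card := by gcongr
    have h2 : κ * p n * (n / 3) = κ * d / 3 := by rw [hd]; ring
    linarith
  · intro s hs
    rw [Fintype.card_fin]
    have h1 := hsr s hs
    have h2 : (s : ℝ) * (m + 1) ≤ n / 2 := by
      calc (s : ℝ) * (m + 1) ≤ (√n / 12) * (6 * √n) := by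
            gcongr
            · linarith
            · linarith
        _ = n / 2 := by linear_combination (1 / 2) * hss
    have h3 : ((n / 2 : ℕ) : ℝ) ≤ n / 2 := Nat.cast_div_le
    have h4 : ((n / 2 + s * (m + 1) : ℕ) : ℝ) ≤ n := by push_cast at h3 ⊢; linarith
    exact_mod_cast h4
  · intro s hs
    rw [Fintype.card_fin]
    have h1 := hsr s hs
    have h2 : (s : ℝ) * p n ≤ 1 / 12 := by nlinarith
    have h3 : (s : ℝ) ≤ n / 12 := by nlinarith
    have h4 : (11 / 12 : ℝ) ≤ (1 - p n) ^ (s - 1) := by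
      have h5 := one_add_mul_le_pow (a := -p n) (by linarith) (s - 1)
      have h6 : ((s - 1 : ℕ) : ℝ) ≤ s := by exact_mod_cast Nat.sub_le s 1
      have h7 : ((s - 1 : ℕ) : ℝ) * p n ≤ s * p n := by gcongr
      rw [← sub_eq_add_neg] at h5
      linarith
    calc (n : ℝ) / 2 ≤ (n - n / 12) * (11 / 12) := by linarith
      _ ≤ _ := by gcongr; linarith
  · rw [Fintype.card_fin, hE, hd]
    ring_nf
  · rw [Fintype.card_fin]
    exact (Nat.lt_pow_succ_log_self (by norm_num) n).le
  · rw [Fintype.card_fin]
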